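/- arXiv:2409.08553 — 6 statements merged into one kernel-verified Lean document; each statement's English description precedes it below -/
import Mathlib

section
/- There exists an ℝ-algebra isomorphism between the Clifford algebra Cl(4,3) and the product algebra Mat₈(ℝ) × Mat₈(ℝ) of two copies of the 8×8 real matrix algebra. -/
/- Signature (4,3) quadratic form on ℝ⁷:
   Q x = x₀² + x₁² + x₂² + x₃² − x₄² − x₅² − x₆². -/
noncomputable def sig43 : QuadraticForm ℝ (Fin 7 → ℝ) :=
  QuadraticMap.weightedSumSquares ℝ ![(1 : ℝ), 1, 1, 1, -1, -1, -1]

/- Standard basis of ℝ⁷. -/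
noncomputable def stdBasis (i : Fin 7) : Fin 7 → ℝ := Pi.single i 1

/- The volume element ν = ι(e₀) ⋯ ι(e₆) of Cl(4,3). -/
noncomputable def vol : CliffordAlgebra sig43 :=
  CliffordAlgebra.ι sig43 (stdBasis 0) * CliffordAlgebra.ι sig43 (stdBasis 1) *
  CliffordAlgebra.ι sig43 (stdBasis 2) * CliffordAlgebra.ι sig43 (stdBasis 3) *
  CliffordAlgebra.ι sig43 (stdBasis 4) * CliffordAlgebra.ι sig43 (stdBasis 5) *
  CliffordAlgebra.ι sig43 (stdBasis 6)

/-!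
Adjoining a hyperbolic plane `x * y` to a quadratic form `Q` replaces its Clifford algebra by the
`2 × 2` matrices over it: the isotropic generators `e`, `f` of the plane satisfy
`e * f + f * e = 1`, hence generate a system of matrix units, and twisting the old generators by
`e * f - f * e`, which anticommutes with `e` and `f`, makes them commute with these units.
When `2` is invertible, `x² - y²` is a hyperbolic plane, so raising the signature by `(1, 1)` passes
to `2 × 2` matrices, and `Cl(n + 1, n)` is the algebra of `2ⁿ × 2ⁿ` matrices over
`Cl(1, 0) = R[u] / (u² - 1) ≅ R × R`.
-/

open CliffordAlgebra QuadraticMap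

section MatrixAlgebras

variable {R A B n : Type*} [CommSemiring R] [Semiring A] [Algebra R A] [Semiring B] [Algebra R B]
  [Fintype n] [DecidableEq n]

/-- A system of matrix units in a semiring, arranged in a matrix: elements `u i j` multiplying like
the elementary matrices, whose diagonal members sum to `1`. Such a system extends a homomorphism
`A → B` to `Matrix n n A`. -/
structure IsMatrixUnits (u : Matrix n n B) : Prop where
  mul_eq : ∀ i j k l, u i j * u k l = if j = k then u i l else 0
  sum_diag : ∑ i, u i i = 1

theorem IsMatrixUnits.sum_mul_sum {u : Matrix n n B} (hu : IsMatrixUnits u) (φ : A →ₐ[R] B)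
    (hφ : ∀ a i j, Commute (φ a) (u i j)) (M N : Matrix n n A) :
    (∑ i, ∑ j, φ (M i j) * u i j) * ∑ k, ∑ l, φ (N k l) * u k l =
      ∑ i, ∑ l, φ ((M * N) i l) * u i l := by
  have hterm (i j k l : n) : φ (M i j) * u i j * (φ (N k l) * u k l) =
      if j = k then φ (M i j * N k l) * u i l else 0 := by
    rw [mul_assoc, ← mul_assoc (u i j), ← (hφ (N k l) i j).eq, mul_assoc, hu.mul_eq, mul_ite,
      mul_ite, mul_zero, mul_zero, map_mul, mul_assoc]
  calc (∑ i, ∑ j, φ (M i j) * u i j) * ∑ k, ∑ l, φ (N k l) * u k l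
    _ = ∑ i, ∑ j, ∑ k, ∑ l, φ (M i j) * u i j * (φ (N k l) * u k l) := by
      simp only [Finset.sum_mul]
      simp only [Finset.mul_sum]
    _ = ∑ i, ∑ j, ∑ l, φ (M i j * N j l) * u i l := by
      refine Finset.sum_congr rfl fun i _ => Finset.sum_congr rfl fun j _ => ?_
      rw [Finset.sum_comm]
      simp [hterm]
    _ = ∑ i, ∑ l, φ ((M * N) i l) * u i l := by
      simp only [Matrix.mul_apply, map_sum, Finset.sum_mul]
      exact Finset.sum_congr rfl fun i _ => Finset.sum_comm

/-- The homomorphism `Matrix n n A → B` extending `φ : A → B` and sending the elementary matrices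
to a system of matrix units commuting with the range of `φ`. -/
def matrixLift (φ : A →ₐ[R] B) {u : Matrix n n B} (hu : IsMatrixUnits u)
    (hφ : ∀ a i j, Commute (φ a) (u i j)) : Matrix n n A →ₐ[R] B :=
  AlgHom.ofLinearMap
    { toFun := fun M => ∑ i, ∑ j, φ (M i j) * u i j
      map_add' := fun M N => by simp [add_mul, Finset.sum_add_distrib]
      map_smul' := fun r M => by simp [Finset.smul_sum] }
    (by simp [Matrix.one_apply, apply_ite φ, ite_mul, hu.sum_diag])
    (fun M N => (hu.sum_mul_sum φ hφ M N).symm)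

theorem matrixLift_apply (φ : A →ₐ[R] B) {u : Matrix n n B} (hu : IsMatrixUnits u)
    (hφ : ∀ a i j, Commute (φ a) (u i j)) (M : Matrix n n A) :
    matrixLift φ hu hφ M = ∑ i, ∑ j, φ (M i j) * u i j :=
  rfl

variable (R A B n) in
/-- Matrices over a product algebra are pairs of matrices. -/
noncomputable def matrixProdAlgEquiv : Matrix n n (A × B) ≃ₐ[R] Matrix n n A × Matrix n n B :=
  AlgEquiv.ofBijective ((AlgHom.fst R A B).mapMatrix.prod (AlgHom.snd R A B).mapMatrix)
    ⟨fun M N h => by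
      ext i j
      · exact congrArg (fun P => P.1 i j) h
      · exact congrArg (fun P => P.2 i j) h,
    fun P => ⟨Matrix.of fun i j => (P.1 i j, P.2 i j), rfl⟩⟩

variable (R A) in
/-- A `1 × 1` matrix is its entry. -/
noncomputable def matrixFinOneAlgEquiv : Matrix (Fin 1) (Fin 1) A ≃ₐ[R] A :=
  (AlgEquiv.ofBijective (Matrix.scalarAlgHom (Fin 1) R)
    ⟨fun _ _ => Matrix.scalar_inj.mp, fun M => ⟨M 0 0, by
      ext i j
      fin_cases i
      fin_cases j
      simp⟩⟩).symm

variable (R A) in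
/-- A `k × k` matrix of `m × m` blocks, read as one matrix. -/
def matrixBlockAlgEquiv (k m : ℕ) :
    Matrix (Fin k) (Fin k) (Matrix (Fin m) (Fin m) A) ≃ₐ[R]
      Matrix (Fin (k * m)) (Fin (k * m)) A :=
  (Matrix.compAlgEquiv (Fin k) (Fin m) A R).trans (Matrix.reindexAlgEquiv R A finProdFinEquiv)

end MatrixAlgebras

section HyperbolicPair

variable {B : Type*} [Ring B] {e f : B}

/-- A hyperbolic pair in a ring: two elements satisfying the Clifford relations of the isotropic
basis of a hyperbolic plane. -/
structure IsHyperbolicPair (e f : B) : Prop where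
  left_mul_self : e * e = 0
  right_mul_self : f * f = 0
  mul_add_mul : e * f + f * e = 1

namespace IsHyperbolicPair

theorem left_mul_right_mul_left (h : IsHyperbolicPair e f) : e * f * e = e := by
  simpa [mul_add, ← mul_assoc, h.left_mul_self] using congrArg (e * ·) h.mul_add_mul

theorem right_mul_left_mul_right (h : IsHyperbolicPair e f) : f * e * f = f := by
  simpa [mul_add, ← mul_assoc, h.right_mul_self] using congrArg (f * ·) h.mul_add_mul

theorem isMatrixUnits (h : IsHyperbolicPair e f) : IsMatrixUnits !![e * f, e; f, f * e] := by
  have hleft (x : B) : e * (e * x) = 0 := by rw [← mul_assoc, h.left_mul_self, zero_mul]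
  have hright (x : B) : f * (f * x) = 0 := by rw [← mul_assoc, h.right_mul_self, zero_mul]
  have hlrl : e * (f * e) = e := by rw [← mul_assoc, h.left_mul_right_mul_left]
  have hrlr : f * (e * f) = f := by rw [← mul_assoc, h.right_mul_left_mul_right]
  refine ⟨fun i j k l => ?_, by simpa [Fin.sum_univ_two] using h.mul_add_mul⟩
  fin_cases i <;> fin_cases j <;> fin_cases k <;> fin_cases l <;>
    simp [mul_assoc, hleft, hright, hlrl, hrlr, h.left_mul_self, h.right_mul_self]

theorem commutator_mul_left (h : IsHyperbolicPair e f) : (e * f - f * e) * e = e := by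
  rw [sub_mul, h.left_mul_right_mul_left, mul_assoc, h.left_mul_self, mul_zero, sub_zero]

theorem left_mul_commutator (h : IsHyperbolicPair e f) : e * (e * f - f * e) = -e := by
  rw [mul_sub, ← mul_assoc, ← mul_assoc, h.left_mul_right_mul_left, h.left_mul_self, zero_mul,
    zero_sub]

theorem commutator_mul_right (h : IsHyperbolicPair e f) : (e * f - f * e) * f = -f := by
  rw [sub_mul, h.right_mul_left_mul_right, mul_assoc, h.right_mul_self, mul_zero, zero_sub]

theorem right_mul_commutator (h : IsHyperbolicPair e f) : f * (e * f - f * e) = f := by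
  rw [mul_sub, ← mul_assoc, ← mul_assoc, h.right_mul_left_mul_right, h.right_mul_self, zero_mul,
    sub_zero]

theorem commutator_mul_self (h : IsHyperbolicPair e f) :
    (e * f - f * e) * (e * f - f * e) = 1 := by
  rw [mul_sub, ← mul_assoc, ← mul_assoc, h.commutator_mul_left, h.commutator_mul_right, neg_mul,
    sub_neg_eq_add, h.mul_add_mul]

end IsHyperbolicPair

end HyperbolicPair

section HyperbolicPlane

variable {R M : Type*} [CommRing R] [AddCommGroup M] [Module R M]

theorem commute_lift {A : Type*} [Semiring A] [Algebra R A] {Q : QuadraticForm R M}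
    (φ : M →ₗ[R] A) (hφ : ∀ v, φ v * φ v = algebraMap R A (Q v)) {b : A}
    (hb : ∀ v, Commute (φ v) b) (x : CliffordAlgebra Q) : Commute (lift Q ⟨φ, hφ⟩ x) b := by
  induction x using CliffordAlgebra.induction with
  | algebraMap r => simpa using Algebra.commute_algebraMap_left r b
  | ι v => simpa using hb v
  | mul x y hx hy => simpa using hx.mul_left hy
  | add x y hx hy => simpa using hx.add_left hy

variable (R) in
/-- The hyperbolic plane: the quadratic form `(x, y) ↦ x * y` on `R × R`. -/
def hyperbolicPlane : QuadraticForm R (R × R) :=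
  linMulLin (LinearMap.fst R R R) (LinearMap.snd R R R)

theorem hyperbolicPlane_apply (p : R × R) : hyperbolicPlane R p = p.1 * p.2 :=
  rfl

variable (Q : QuadraticForm R M)

/-- The orthogonal sum of `Q` and a hyperbolic plane. -/
abbrev hyperbolicSum : QuadraticForm R (M × R × R) :=
  Q.prod (hyperbolicPlane R)

/-- The vectors of `Q ⊥ H` as `2 × 2` matrices over the Clifford algebra of `Q`, the isotropic
basis of the hyperbolic plane `H` going to the two off-diagonal elementary matrices. -/
def vectorMatrix : M × R × R →ₗ[R] Matrix (Fin 2) (Fin 2) (CliffordAlgebra Q) where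
  toFun m := !![ι Q m.1, algebraMap R _ m.2.1; algebraMap R _ m.2.2, -ι Q m.1]
  map_add' m m' := by ext i j; fin_cases i <;> fin_cases j <;> simp [add_comm]
  map_smul' r m := by ext i j; fin_cases i <;> fin_cases j <;> simp [Algebra.smul_def]

theorem vectorMatrix_mul_self (m : M × R × R) :
    vectorMatrix Q m * vectorMatrix Q m = algebraMap R _ (hyperbolicSum Q m) := by
  rw [vectorMatrix, LinearMap.coe_mk, AddHom.coe_mk, Matrix.mul_fin_two]
  ext i j
  fin_cases i <;> fin_cases j <;>
    simp [Matrix.algebraMap_matrix_apply, hyperbolicPlane_apply, ι_sq_scalar, Algebra.commutes,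
      ← map_mul, ← map_add, add_comm, mul_comm]

/-- The homomorphism from the Clifford algebra of `Q ⊥ H` to the `2 × 2` matrices over that of
`Q`. -/
def toMatrixClifford :
    CliffordAlgebra (hyperbolicSum Q) →ₐ[R] Matrix (Fin 2) (Fin 2) (CliffordAlgebra Q) :=
  lift _ ⟨vectorMatrix Q, vectorMatrix_mul_self Q⟩

theorem toMatrixClifford_ι (m : M × R × R) :
    toMatrixClifford Q (ι _ m) =
      !![ι Q m.1, algebraMap R _ m.2.1; algebraMap R _ m.2.2, -ι Q m.1] :=
  lift_ι_apply _ _ _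

/-- The generator of the Clifford algebra of `Q ⊥ H` for the first isotropic basis vector of
`H`. -/
abbrev isotropicLeft : CliffordAlgebra (hyperbolicSum Q) :=
  ι _ (0, 1, 0)

/-- The generator of the Clifford algebra of `Q ⊥ H` for the second isotropic basis vector of
`H`. -/
abbrev isotropicRight : CliffordAlgebra (hyperbolicSum Q) :=
  ι _ (0, 0, 1)

theorem isHyperbolicPair_isotropic : IsHyperbolicPair (isotropicLeft Q) (isotropicRight Q) where
  left_mul_self := by simp [ι_sq_scalar, hyperbolicPlane_apply]
  right_mul_self := by simp [ι_sq_scalar, hyperbolicPlane_apply]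
  mul_add_mul := by simp [ι_mul_ι_add_swap, polar, hyperbolicPlane_apply]

theorem ι_inl_mul_ι_inr (v : M) (p : R × R) :
    ι (hyperbolicSum Q) (v, 0) * ι _ (0, p) = -(ι _ (0, p) * ι _ (v, 0)) :=
  ι_mul_ι_comm_of_isOrtho (IsOrtho.inl_inr _ _)

/-- The commutator of the isotropic generators, an involution anticommuting with both. -/
abbrev isotropicCommutator : CliffordAlgebra (hyperbolicSum Q) :=
  isotropicLeft Q * isotropicRight Q - isotropicRight Q * isotropicLeft Q

theorem commute_ι_inl_isotropicCommutator (v : M) :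
    Commute (ι (hyperbolicSum Q) (v, 0)) (isotropicCommutator Q) := by
  have hmul (p q : R × R) :
      Commute (ι (hyperbolicSum Q) (v, 0)) (ι _ (0, p) * ι _ (0, q)) := by
    rw [commute_iff_eq, ← mul_assoc, ι_inl_mul_ι_inr, neg_mul, mul_assoc, ι_inl_mul_ι_inr,
      mul_neg, neg_neg, mul_assoc]
  exact (hmul _ _).sub_right (hmul _ _)

/-- The vectors of `Q` in the Clifford algebra of `Q ⊥ H`, multiplied by the commutator of the
isotropic generators so as to commute with these generators. -/
def twistedVector : M →ₗ[R] CliffordAlgebra (hyperbolicSum Q) :=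
  LinearMap.mulRight R (isotropicCommutator Q) ∘ₗ ι _ ∘ₗ LinearMap.inl R M (R × R)

theorem twistedVector_apply (v : M) :
    twistedVector Q v = ι (hyperbolicSum Q) (v, 0) * isotropicCommutator Q :=
  rfl

theorem twistedVector_mul_self (v : M) :
    twistedVector Q v * twistedVector Q v = algebraMap R _ (Q v) := by
  rw [twistedVector_apply, (commute_ι_inl_isotropicCommutator Q v).symm.mul_mul_mul_comm,
    (isHyperbolicPair_isotropic Q).commutator_mul_self, mul_one, ι_sq_scalar]
  simp

theorem commute_twistedVector_isotropicLeft (v : M) :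
    Commute (twistedVector Q v) (isotropicLeft Q) := by
  have h := isHyperbolicPair_isotropic Q
  rw [commute_iff_eq, twistedVector_apply, mul_assoc, h.commutator_mul_left, ← mul_assoc,
    ← neg_eq_iff_eq_neg.mpr (ι_inl_mul_ι_inr Q v _), neg_mul, mul_assoc, h.left_mul_commutator,
    mul_neg, neg_neg]

theorem commute_twistedVector_isotropicRight (v : M) :
    Commute (twistedVector Q v) (isotropicRight Q) := by
  have h := isHyperbolicPair_isotropic Q
  rw [commute_iff_eq, twistedVector_apply, mul_assoc, h.commutator_mul_right, ← mul_assoc,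
    ← neg_eq_iff_eq_neg.mpr (ι_inl_mul_ι_inr Q v _), neg_mul, mul_assoc, h.right_mul_commutator,
    mul_neg]

/-- The embedding of the Clifford algebra of `Q` into the centralizer of the hyperbolic plane in the
Clifford algebra of `Q ⊥ H`. -/
def twistedEmbedding : CliffordAlgebra Q →ₐ[R] CliffordAlgebra (hyperbolicSum Q) :=
  lift Q ⟨twistedVector Q, twistedVector_mul_self Q⟩

theorem twistedEmbedding_ι (v : M) :
    twistedEmbedding Q (ι Q v) = ι (hyperbolicSum Q) (v, 0) * isotropicCommutator Q :=
  lift_ι_apply _ _ _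

/-- The matrix units in the Clifford algebra of `Q ⊥ H`. -/
abbrev isotropicUnits : Matrix (Fin 2) (Fin 2) (CliffordAlgebra (hyperbolicSum Q)) :=
  !![isotropicLeft Q * isotropicRight Q, isotropicLeft Q;
    isotropicRight Q, isotropicRight Q * isotropicLeft Q]

theorem commute_twistedEmbedding_isotropicUnits (a : CliffordAlgebra Q) (i j : Fin 2) :
    Commute (twistedEmbedding Q a) (isotropicUnits Q i j) := by
  have hleft : Commute (twistedEmbedding Q a) (isotropicLeft Q) :=
    commute_lift _ _ (commute_twistedVector_isotropicLeft Q) a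
  have hright : Commute (twistedEmbedding Q a) (isotropicRight Q) :=
    commute_lift _ _ (commute_twistedVector_isotropicRight Q) a
  fin_cases i <;> fin_cases j
  exacts [hleft.mul_right hright, hleft, hright, hright.mul_right hleft]

/-- The inverse of `toMatrixClifford`. -/
def ofMatrixClifford :
    Matrix (Fin 2) (Fin 2) (CliffordAlgebra Q) →ₐ[R] CliffordAlgebra (hyperbolicSum Q) :=
  matrixLift (twistedEmbedding Q) (isHyperbolicPair_isotropic Q).isMatrixUnits
    (commute_twistedEmbedding_isotropicUnits Q)

theorem ofMatrixClifford_toMatrixClifford_ι (m : M × R × R) :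
    ofMatrixClifford Q (toMatrixClifford Q (ι _ m)) = ι _ m := by
  obtain ⟨v, x, y⟩ := m
  have hv : twistedEmbedding Q (ι Q v) * isotropicCommutator Q = ι _ (v, 0) := by
    rw [twistedEmbedding_ι, mul_assoc, (isHyperbolicPair_isotropic Q).commutator_mul_self, mul_one]
  calc ofMatrixClifford Q (toMatrixClifford Q (ι _ (v, x, y)))
    _ = twistedEmbedding Q (ι Q v) * isotropicCommutator Q + x • isotropicLeft Q +
          y • isotropicRight Q := by
      rw [ofMatrixClifford, matrixLift_apply, toMatrixClifford_ι]
      simp only [Fin.sum_univ_two, Matrix.of_apply, Matrix.cons_val', Matrix.cons_val_fin_one,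
        Matrix.cons_val_zero, Matrix.cons_val_one, AlgHom.commutes, map_neg, neg_mul, mul_sub,
        Algebra.smul_def]
      abel
    _ = ι _ (v, x, y) := by
      simp [hv, ← map_smul, ← map_add]

theorem toMatrixClifford_twistedEmbedding (a : CliffordAlgebra Q) :
    toMatrixClifford Q (twistedEmbedding Q a) = Matrix.scalar (Fin 2) a := by
  suffices h : (toMatrixClifford Q).comp (twistedEmbedding Q) = Matrix.scalarAlgHom (Fin 2) R from
    DFunLike.congr_fun h a
  ext v i j
  fin_cases i <;> fin_cases j <;>
    simp [twistedEmbedding_ι, toMatrixClifford_ι]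

theorem toMatrixClifford_isotropicUnits (i j : Fin 2) :
    toMatrixClifford Q (isotropicUnits Q i j) = Matrix.single i j 1 := by
  fin_cases i <;> fin_cases j <;> ext k l <;> fin_cases k <;> fin_cases l <;>
    simp [toMatrixClifford_ι]

theorem toMatrixClifford_ofMatrixClifford (N : Matrix (Fin 2) (Fin 2) (CliffordAlgebra Q)) :
    toMatrixClifford Q (ofMatrixClifford Q N) = N := by
  rw [ofMatrixClifford, matrixLift_apply]
  simp only [map_sum, map_mul, toMatrixClifford_twistedEmbedding, toMatrixClifford_isotropicUnits]
  conv_rhs => rw [Matrix.matrix_eq_sum_single N]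
  simp [Matrix.scalar_apply, ← Matrix.smul_eq_diagonal_mul, Matrix.smul_single]

/-- Adjoining a hyperbolic plane to a quadratic form passes to `2 × 2` matrices over its Clifford
algebra. -/
def cliffordHyperbolicSumEquiv :
    CliffordAlgebra (hyperbolicSum Q) ≃ₐ[R] Matrix (Fin 2) (Fin 2) (CliffordAlgebra Q) :=
  AlgEquiv.ofAlgHom (toMatrixClifford Q) (ofMatrixClifford Q)
    (AlgHom.ext (toMatrixClifford_ofMatrixClifford Q))
    (CliffordAlgebra.hom_ext (LinearMap.ext (ofMatrixClifford_toMatrixClifford_ι Q)))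

end HyperbolicPlane

section RankOne

variable {R A : Type*} [CommRing R] [Ring A] [Algebra R A]

/-- The homomorphism `R × R → A` given by an idempotent `e` of the algebra `A`: it sends the two
canonical idempotents of `R × R` to `e` and `1 - e`. -/
def prodLiftOfIdempotent {e : A} (he : IsIdempotentElem e) : R × R →ₐ[R] A :=
  AlgHom.ofLinearMap
    ((LinearMap.toSpanSingleton R A e).coprod (LinearMap.toSpanSingleton R A (1 - e)))
    (by simp)
    (fun a b => by
      simp [add_mul, mul_add, smul_smul, he.eq, he.one_sub.eq, he.mul_one_sub_self,
        he.one_sub_mul_self, mul_comm])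

theorem prodLiftOfIdempotent_apply {e : A} (he : IsIdempotentElem e) (a : R × R) :
    prodLiftOfIdempotent he a = a.1 • e + a.2 • (1 - e) :=
  rfl

variable (R) in
/-- The homomorphism from the Clifford algebra of the square form to `R × R` evaluating its
generator at the two square roots `1`, `-1` of `1`. -/
def cliffordSqToProd : CliffordAlgebra (sq (R := R)) →ₐ[R] R × R :=
  lift _ ⟨LinearMap.prod LinearMap.id (-LinearMap.id), fun x => by ext <;> simp⟩

theorem cliffordSqToProd_ι (x : R) : cliffordSqToProd R (ι _ x) = (x, -x) :=
  lift_ι_apply _ _ _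

variable [Invertible (2 : R)]

theorem isIdempotentElem_invOf_two_smul_one_add {u : A} (hu : u * u = 1) :
    IsIdempotentElem (⅟(2 : R) • (1 + u)) := by
  have hadd : (1 + u) * (1 + u) = (2 : R) • (1 + u) := by
    rw [two_smul, add_mul, one_mul, mul_add, hu, mul_one, add_comm u 1]
  rw [IsIdempotentElem, smul_mul_smul_comm, hadd, smul_smul, mul_assoc, invOf_mul_self, mul_one]

variable (R) in
theorem isIdempotentElem_invOf_two_smul_one_add_ι_sq :
    IsIdempotentElem (⅟(2 : R) • (1 + ι (sq (R := R)) 1)) :=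
  isIdempotentElem_invOf_two_smul_one_add (by simp [ι_sq_scalar])

variable (R) in
/-- The Clifford algebra of the square form splits. -/
def cliffordSqEquiv : CliffordAlgebra (sq (R := R)) ≃ₐ[R] R × R :=
  AlgEquiv.ofAlgHom (cliffordSqToProd R)
    (prodLiftOfIdempotent (isIdempotentElem_invOf_two_smul_one_add_ι_sq R))
    (by ext a <;> simp [prodLiftOfIdempotent_apply, cliffordSqToProd_ι, ← mul_add])
    (by
      ext
      simp [prodLiftOfIdempotent_apply, cliffordSqToProd_ι, ← add_sub_assoc,
        ← two_smul R, smul_smul])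

end RankOne

section Signature

variable (R : Type*) [CommRing R]

/-- The diagonal quadratic form with `p` coefficients `1` and `q` coefficients `-1`. -/
def signatureForm (p q : ℕ) : QuadraticForm R (Fin p ⊕ Fin q → R) :=
  weightedSumSquares R (Sum.elim 1 (-1) : Fin p ⊕ Fin q → R)

theorem signatureForm_apply (p q : ℕ) (x : Fin p ⊕ Fin q → R) :
    signatureForm R p q x =
      ∑ i, x (Sum.inl i) * x (Sum.inl i) - ∑ j, x (Sum.inr j) * x (Sum.inr j) := by
  simp [signatureForm, weightedSumSquares_apply, sub_eq_add_neg]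

/-- The form of signature `(1, 0)` in its single coordinate. -/
def signatureFormOneZeroIsometry : (signatureForm R 1 0).IsometryEquiv (sq (R := R)) where
  toFun x := x (.inl 0)
  invFun a := fun _ => a
  map_add' _ _ := rfl
  map_smul' _ _ := rfl
  left_inv x := by
    ext (i | j)
    · rw [Fin.fin_one_eq_zero i]
    · exact j.elim0
  right_inv _ := rfl
  map_app' x := by simp [signatureForm_apply]

variable [Invertible (2 : R)]

/-- The form of signature `(p + 1, q + 1)` is that of signature `(p, q)` plus a hyperbolic plane:
`x² - y² = (x + y) * (x - y)` for the first coordinates `x`, `y` of either sign. -/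
def signatureFormSuccIsometry (p q : ℕ) :
    (signatureForm R (p + 1) (q + 1)).IsometryEquiv (hyperbolicSum (signatureForm R p q)) where
  toFun x := (Sum.elim (fun i => x (.inl i.succ)) (fun j => x (.inr j.succ)),
    x (.inl 0) + x (.inr 0), x (.inl 0) - x (.inr 0))
  invFun m := Sum.elim (Fin.cons (⅟2 * (m.2.1 + m.2.2)) fun i => m.1 (.inl i))
    (Fin.cons (⅟2 * (m.2.1 - m.2.2)) fun j => m.1 (.inr j))
  map_add' x y := by
    ext i
    · cases i <;> rfl
    · exact add_add_add_comm _ _ _ _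
    · exact add_sub_add_comm _ _ _ _
  map_smul' r x := by
    ext i
    · cases i <;> rfl
    · exact (mul_add _ _ _).symm
    · exact (mul_sub _ _ _).symm
  left_inv x := by
    ext i
    rcases i with i | i <;> refine Fin.cases ?_ (fun i => ?_) i <;> simp [← two_mul]
  right_inv m := by
    ext i <;> [cases i; skip; skip] <;> simp [← mul_add, ← mul_sub, ← two_mul]
  map_app' x := by
    simp only [signatureForm_apply, prod_apply, hyperbolicPlane_apply, Fin.sum_univ_succ,
      Sum.elim_inl, Sum.elim_inr]
    ring

theorem clifford_signatureForm_add_iso_matrix (n p q : ℕ) :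
    Nonempty (CliffordAlgebra (signatureForm R (n + p) (n + q)) ≃ₐ[R]
      Matrix (Fin (2 ^ n)) (Fin (2 ^ n)) (CliffordAlgebra (signatureForm R p q))) := by
  induction n generalizing p q with
  | zero =>
    rw [zero_add, zero_add]
    exact ⟨(matrixFinOneAlgEquiv R _).symm⟩
  | succ n ih =>
    obtain ⟨e⟩ := ih (p + 1) (q + 1)
    rw [Nat.add_right_comm n 1 p, Nat.add_right_comm n 1 q]
    exact ⟨e.trans <| ((equivOfIsometry (signatureFormSuccIsometry R p q)).trans
      (cliffordHyperbolicSumEquiv (signatureForm R p q))).mapMatrix.trans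
      (matrixBlockAlgEquiv R _ (2 ^ n) 2)⟩

theorem cl43_iso_matrix_prod_general (n : ℕ) :
    Nonempty (CliffordAlgebra (signatureForm R (n + 1) n) ≃ₐ[R]
      Matrix (Fin (2 ^ n)) (Fin (2 ^ n)) R × Matrix (Fin (2 ^ n)) (Fin (2 ^ n)) R) := by
  obtain ⟨e⟩ := clifford_signatureForm_add_iso_matrix R n 1 0
  let split : CliffordAlgebra (signatureForm R 1 0) ≃ₐ[R] R × R :=
    (equivOfIsometry (signatureFormOneZeroIsometry R)).trans (cliffordSqEquiv R)
  exact ⟨(e.trans split.mapMatrix).trans (matrixProdAlgEquiv R R R (Fin (2 ^ n)))⟩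

end Signature

/-- `sig43` is the form of signature `(4, 3)`, the coordinates being listed by sign. -/
def sig43Isometry : sig43.IsometryEquiv (signatureForm ℝ 4 3) where
  toLinearEquiv := LinearEquiv.funCongrLeft ℝ ℝ (finSumFinEquiv (m := 4) (n := 3))
  map_app' x := by
    have hweights (i : Fin 4 ⊕ Fin 3) :
        (![1, 1, 1, 1, -1, -1, -1] : Fin 7 → ℝ) (finSumFinEquiv i) =
          (Sum.elim 1 (-1) : Fin 4 ⊕ Fin 3 → ℝ) i := by
      rcases i with i | i <;> fin_cases i <;> rfl
    rw [sig43, weightedSumSquares_apply, signatureForm, weightedSumSquares_apply,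
      ← (finSumFinEquiv (m := 4) (n := 3)).sum_comp]
    exact Finset.sum_congr rfl fun i _ => by rw [hweights]; rfl

/-- Cl(4,3) ≅ Mat₈(ℝ) × Mat₈(ℝ) as ℝ-algebras. -/
theorem cl43_iso_matrix_prod :
    Nonempty (CliffordAlgebra sig43 ≃ₐ[ℝ]
      (Matrix (Fin 8) (Fin 8) ℝ × Matrix (Fin 8) (Fin 8) ℝ)) := by
  obtain ⟨e⟩ := cl43_iso_matrix_prod_general ℝ 3
  exact ⟨(equivOfIsometry sig43Isometry).trans e⟩
end

section
/- Let γ : Cl(4,3) → Mat₈(ℝ) be a surjective ℝ-algebra homomorphism with γ(ν) = l • 1 for a sign l ∈ {1, −1}. Then the kernel of γ equals the two-sided ideal of Cl(4,3) generated by the element 1 − l • ν; equivalently, γ factors through the simple summand Cl_l(4,3) = ½(1 + l ν) · Cl(4,3) of the splitting Cl(4,3) = Cl₊(4,3) ⊕ Cl₋(4,3). -/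
/-!
Modulo `1 - l • ν` the last generator `e₆` is a scalar multiple of `e₀ ⋯ e₅`, so the quotient is
generated by the six anticommuting elements `x₀, …, x₅`. Each submodule `W i = ⟨1, xᵢ⟩` satisfies
`W i * W i = W i`, and the `W i` commute with each other because the `xᵢ` anticommute. Hence
`W 0 * ⋯ * W 5` is a subalgebra containing all generators, so the quotient is spanned by
`2 ^ 6 = 64` elements. As `64 = dim Mat₈(ℝ)`, the surjection that `γ` induces on the quotient is
injective.
-/

open Module Submodule
open scoped Pointwise

section SpanRank

variable {R : Type*}

theorem injective_of_surjective_of_spanRank_le_finrank {M N : Type*} [Semiring R]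
    [OrzechProperty R] [AddCommMonoid M] [Module R M] [AddCommMonoid N] [Module R N]
    [Module.Free R N] {f : M →ₗ[R] N} (hf : Function.Surjective f)
    (h : (⊤ : Submodule R M).spanRank ≤ finrank R N) : Function.Injective f := by
  cases subsingleton_or_nontrivial R
  · have := Module.subsingleton R M
    exact Function.injective_of_subsingleton f
  have hfg : (⊤ : Submodule R M).FG :=
    spanRank_finite_iff_fg.mp (h.trans_lt Cardinal.natCast_lt_aleph0)
  have : Module.Finite R M := ⟨hfg⟩
  have : Module.Finite R N := .of_surjective f hf
  obtain ⟨s, hs_card, hs_span⟩ := hfg.exists_span_finset_card_eq_spanFinrank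
  let g : (s →₀ R) →ₗ[R] M := Finsupp.linearCombination R Subtype.val
  have hg : Function.Surjective g := by
    rw [← LinearMap.range_eq_top, Finsupp.range_linearCombination, Subtype.range_coe, hs_span]
  have hcard : finrank R (s →₀ R) ≤ finrank R N := by
    rwa [finrank_finsupp_self, Fintype.card_coe, hs_card, ← hfg.spanRank_le_iff]
  exact .of_comp_right
    (OrzechProperty.bijective_of_surjective_of_finrank_le (f ∘ₗ g) (hf.comp hg) hcard).1 hg

theorem spanRank_mul_le {A : Type*} [CommSemiring R] [Semiring A] [Algebra R A]
    (M N : Submodule R A) : (M * N).spanRank ≤ M.spanRank * N.spanRank := by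
  rw [← generators_card M, ← generators_card N]
  calc (M * N).spanRank = (span R (M.generators * N.generators)).spanRank := by
        rw [← span_mul_span, span_generators, span_generators]
    _ ≤ _ := (spanRank_span_le_card _).trans Cardinal.mk_mul_le

theorem spanRank_noncommProd_le {A ι : Type*} [CommSemiring R] [Semiring A] [Algebra R A]
    (s : Finset ι) (W : ι → Submodule R A)
    (comm : (s : Set ι).Pairwise (Function.onFun Commute W)) {k : Cardinal}
    (hW : ∀ i ∈ s, (W i).spanRank ≤ k) : (s.noncommProd W comm).spanRank ≤ k ^ s.card := by
  induction s using Finset.cons_induction_on with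
  | empty =>
    simpa [one_eq_span] using spanRank_span_le_card (R := R) ({1} : Set A)
  | cons a s ha ih =>
    rw [Finset.noncommProd_cons, Finset.card_cons, pow_succ']
    exact (spanRank_mul_le _ _).trans <| mul_le_mul' (hW a (by simp))
      (ih _ fun i hi ↦ hW i (by simp [hi]))

end SpanRank

theorem isIdempotentElem_noncommProd {ι M : Type*} [Monoid M] (s : Finset ι) (f : ι → M)
    (comm : (s : Set ι).Pairwise (Function.onFun Commute f))
    (hf : ∀ i ∈ s, IsIdempotentElem (f i)) : IsIdempotentElem (s.noncommProd f comm) := by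
  rw [IsIdempotentElem, ← Finset.noncommProd_mul_distrib f f comm comm comm]
  exact Finset.noncommProd_congr rfl hf _

theorem one_le_noncommProd {ι M : Type*} [Monoid M] [Preorder M] [MulLeftMono M]
    (s : Finset ι) (f : ι → M) (comm : (s : Set ι).Pairwise (Function.onFun Commute f))
    (hf : ∀ i ∈ s, 1 ≤ f i) : 1 ≤ s.noncommProd f comm :=
  s.noncommProd_induction f comm (1 ≤ ·) (fun _ _ ↦ one_le_mul) le_rfl hf

theorem le_noncommProd {ι M : Type*} [Monoid M] [Preorder M] [MulLeftMono M]
    {s : Finset ι} (f : ι → M) (comm : (s : Set ι).Pairwise (Function.onFun Commute f))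
    (hf : ∀ i ∈ s, 1 ≤ f i) {i : ι} (hi : i ∈ s) : f i ≤ s.noncommProd f comm := by
  classical
  rw [← Finset.mul_noncommProd_erase s hi f comm]
  exact le_mul_of_one_le_right' <|
    one_le_noncommProd _ _ _ fun j hj ↦ hf j (Finset.mem_of_mem_erase hj)

section Anticommuting

variable {R A ι : Type*} [CommRing R] [Ring A] [Algebra R A]

theorem isIdempotentElem_span_one_pair {x : A} (hx : x * x ∈ (1 : Submodule R A)) :
    IsIdempotentElem (span R {1, x}) := by
  have one_mem : (1 : A) ∈ span R {1, x} := subset_span (by simp)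
  have x_mem : x ∈ span R {1, x} := subset_span (by simp)
  apply le_antisymm
  · rw [span_mul_span, span_le]
    rintro _ ⟨_, rfl | rfl, _, rfl | rfl, rfl⟩
    · simpa using one_mem
    · simpa using x_mem
    · simpa using x_mem
    · exact one_le.mpr one_mem hx
  · exact le_mul_of_one_le_right' (one_le.mpr one_mem)

theorem span_one_pair_mul_le {x y : A} (hxy : x * y = -(y * x)) :
    span R {1, x} * span R {1, y} ≤ span R {1, y} * span R {1, x} := by
  rw [span_mul_span, span_mul_span, span_le]
  have mul_mem {a b : A} (ha : a ∈ ({1, y} : Set A)) (hb : b ∈ ({1, x} : Set A)) :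
      a * b ∈ span R ({1, y} * {1, x} : Set A) := subset_span (Set.mul_mem_mul ha hb)
  rintro _ ⟨a, rfl | rfl, b, rfl | rfl, rfl⟩
  · simpa using mul_mem (.inl rfl) (.inl rfl)
  · simpa using mul_mem (.inr rfl) (.inl rfl)
  · simpa using mul_mem (.inl rfl) (.inr rfl)
  · simpa [hxy] using mul_mem (.inr rfl) (.inr rfl)

theorem commute_span_one_pair {x y : A} (hxy : x * y = -(y * x)) :
    Commute (span R {1, x}) (span R {1, y}) :=
  (span_one_pair_mul_le hxy).antisymm (span_one_pair_mul_le (by rw [hxy, neg_neg]))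

theorem spanRank_top_le_two_pow [Fintype ι] {x : ι → A}
    (hsq : ∀ i, x i * x i ∈ (1 : Submodule R A))
    (hanti : Pairwise fun i j ↦ x i * x j = -(x j * x i))
    (hx : Algebra.adjoin R (Set.range x) = ⊤) :
    (⊤ : Submodule R A).spanRank ≤ 2 ^ Fintype.card ι := by
  let W (i : ι) : Submodule R A := span R {1, x i}
  have comm : (↑(Finset.univ : Finset ι) : Set ι).Pairwise (Function.onFun Commute W) :=
    fun i _ j _ hij ↦ commute_span_one_pair (hanti hij)
  have one_le_W (i : ι) (_ : i ∈ Finset.univ) : 1 ≤ W i := one_le.mpr (subset_span (by simp))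
  let V : Submodule R A := Finset.univ.noncommProd W comm
  have one_mem : 1 ∈ V := one_le.mp (one_le_noncommProd _ W comm one_le_W)
  have mul_V : V * V = V :=
    isIdempotentElem_noncommProd _ W comm fun i _ ↦ isIdempotentElem_span_one_pair (hsq i)
  have x_mem (i : ι) : x i ∈ V :=
    le_noncommProd W comm one_le_W (Finset.mem_univ i) (subset_span (by simp))
  let S : Subalgebra R A := V.toSubalgebra one_mem fun a b ha hb ↦ mul_V.le (mul_mem_mul ha hb)
  have hS : S = ⊤ := by
    rw [eq_top_iff, ← hx, Algebra.adjoin_le_iff]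
    exact Set.range_subset_iff.mpr x_mem
  have hV : V = ⊤ := congrArg Subalgebra.toSubmodule hS
  rw [← hV]
  refine spanRank_noncommProd_le _ W comm fun i _ ↦ (spanRank_span_le_card _).trans ?_
  exact Cardinal.mk_insert_le.trans (by rw [Cardinal.mk_singleton, one_add_one_eq_two])

theorem last_mem_adjoin_castSucc {n : ℕ} {x : Fin (n + 1) → A} {l : R}
    (hsq : x (Fin.last n) * x (Fin.last n) ∈ (1 : Submodule R A))
    (hl : l • (List.ofFn x).prod = 1) :
    x (Fin.last n) ∈ Algebra.adjoin R (Set.range fun i : Fin n ↦ x i.castSucc) := by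
  obtain ⟨c, hc⟩ := mem_one.mp hsq
  let p : A := (List.ofFn fun i : Fin n ↦ x i.castSucc).prod
  have hp : p ∈ Algebra.adjoin R (Set.range fun i : Fin n ↦ x i.castSucc) :=
    list_prod_mem fun y hy ↦ Algebra.subset_adjoin (List.mem_ofFn.mp hy)
  have hlast : x (Fin.last n) = (l * c) • p := by
    calc x (Fin.last n) = l • (List.ofFn x).prod * x (Fin.last n) := by rw [hl, one_mul]
      _ = l • (p * (x (Fin.last n) * x (Fin.last n))) := by
        rw [List.ofFn_succ', List.concat_eq_append, List.prod_append, List.prod_singleton,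
          smul_mul_assoc, mul_assoc]
      _ = (l * c) • p := by rw [← hc, ← Algebra.commutes, ← Algebra.smul_def, smul_smul]
  rw [hlast]
  exact Subalgebra.smul_mem _ hp _

theorem adjoin_range_castSucc_eq_top {n : ℕ} {x : Fin (n + 1) → A} {l : R}
    (hsq : x (Fin.last n) * x (Fin.last n) ∈ (1 : Submodule R A))
    (hl : l • (List.ofFn x).prod = 1) (hx : Algebra.adjoin R (Set.range x) = ⊤) :
    Algebra.adjoin R (Set.range fun i : Fin n ↦ x i.castSucc) = ⊤ := by
  rw [eq_top_iff, ← hx, Algebra.adjoin_le_iff, Set.range_subset_iff]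
  refine Fin.lastCases (last_mem_adjoin_castSucc hsq hl) fun i ↦ ?_
  exact Algebra.subset_adjoin (Set.mem_range_self i)

theorem injective_of_surjective_of_anticommuting {B : Type*} [Ring B] [Algebra R B]
    [Module.Free R B] {n : ℕ} (hB : 2 ^ n ≤ finrank R B) {x : Fin (n + 1) → A}
    (hsq : ∀ i, x i * x i ∈ (1 : Submodule R A))
    (hanti : Pairwise fun i j ↦ x i * x j = -(x j * x i))
    (hx : Algebra.adjoin R (Set.range x) = ⊤) {l : R} (hl : l • (List.ofFn x).prod = 1)
    {f : A →ₐ[R] B} (hf : Function.Surjective f) : Function.Injective f := by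
  have hrank : (⊤ : Submodule R A).spanRank ≤ 2 ^ Fintype.card (Fin n) :=
    spanRank_top_le_two_pow (fun i ↦ hsq i.castSucc)
      (hanti.comp_of_injective (Fin.castSucc_injective n))
      (adjoin_range_castSucc_eq_top (hsq _) hl hx)
  refine injective_of_surjective_of_spanRank_le_finrank (f := f.toLinearMap) hf (hrank.trans ?_)
  rw [Fintype.card_fin]
  exact_mod_cast hB

end Anticommuting

theorem ker_eq_of_injective_lift {A B : Type*} [Ring A] [Ring B] {I : TwoSidedIdeal A}
    {f : A →+* B} (hI : I.ringCon ≤ RingCon.ker f)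
    (hinj : Function.Injective (I.ringCon.lift f hI)) : TwoSidedIdeal.ker f = I := by
  ext x
  rw [TwoSidedIdeal.mem_ker, TwoSidedIdeal.mem_iff, RingCon.lift_injective_iff.mp hinj,
    RingCon.ker_apply, map_zero]

section CliffordAlgebra

open CliffordAlgebra

variable {R M : Type*} [CommRing R] [AddCommGroup M] [Module R M]

/-- The product `ι(e₀) ⋯ ι(eₙ₋₁)` in the Clifford algebra: the volume element `ν` of `Q` when `e` is
an orthogonal basis. -/
def volumeElement (Q : QuadraticForm R M) {n : ℕ} (e : Fin n → M) : CliffordAlgebra Q :=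
  (List.ofFn fun i ↦ ι Q (e i)).prod

theorem adjoin_range_ι_eq_top (Q : QuadraticForm R M) {κ : Type*} {e : κ → M}
    (he : span R (Set.range e) = ⊤) :
    Algebra.adjoin R (Set.range fun i ↦ ι Q (e i)) = ⊤ := by
  have hspan : span R (Set.range fun i ↦ ι Q (e i)) = LinearMap.range (ι Q) := by
    rw [Set.range_comp' (ι Q) e, span_image, he, Submodule.map_top]
  rw [← Algebra.adjoin_span, hspan, LinearMap.coe_range, adjoin_range_ι]

variable {Q : QuadraticForm R M} {n : ℕ} {e : Fin (n + 1) → M} {B : Type*} [Ring B] [Algebra R B]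
  [Module.Free R B] {l : R}

theorem injective_of_surjective_of_smul_map_volumeElement_eq_one {A : Type*} [Ring A] [Algebra R A]
    (he : span R (Set.range e) = ⊤) (hortho : Pairwise fun i j ↦ Q.IsOrtho (e i) (e j))
    (hB : 2 ^ n ≤ finrank R B) {π : CliffordAlgebra Q →ₐ[R] A} (hπ : Function.Surjective π)
    (hν : l • π (volumeElement Q e) = 1) {f : A →ₐ[R] B} (hf : Function.Surjective f) :
    Function.Injective f := by
  let x (i : Fin (n + 1)) : A := π (ι Q (e i))
  have hsq (i) : x i * x i ∈ (1 : Submodule R A) := by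
    rw [← map_mul, ι_sq_scalar, AlgHom.commutes]
    exact Submodule.algebraMap_mem _
  have hanti : Pairwise fun i j ↦ x i * x j = -(x j * x i) := fun i j hij ↦ by
    simp only [x, ← map_mul, ← map_neg, ι_mul_ι_comm_of_isOrtho (hortho hij)]
  have hgen : Algebra.adjoin R (Set.range x) = ⊤ := by
    rw [Set.range_comp' π, ← AlgHom.map_adjoin, adjoin_range_ι_eq_top Q he, Algebra.map_top,
      (AlgHom.range_eq_top π).mpr hπ]
  have hprod : l • (List.ofFn x).prod = 1 := by
    rw [← hν, volumeElement, map_list_prod, List.map_ofFn, Function.comp_def]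
  exact injective_of_surjective_of_anticommuting hB hsq hanti hgen hprod hf

theorem ker_eq_span_one_sub_vol_general
    (he : span R (Set.range e) = ⊤) (hortho : Pairwise fun i j ↦ Q.IsOrtho (e i) (e j))
    (hB : 2 ^ n ≤ finrank R B) {γ : CliffordAlgebra Q →ₐ[R] B} (hγ : Function.Surjective γ)
    (hν : l • γ (volumeElement Q e) = 1) :
    TwoSidedIdeal.ker γ = TwoSidedIdeal.span {1 - l • volumeElement Q e} := by
  set I := TwoSidedIdeal.span {1 - l • volumeElement Q e} with hI
  have hle : I ≤ TwoSidedIdeal.ker γ := by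
    rw [hI, TwoSidedIdeal.span_le, Set.singleton_subset_iff, SetLike.mem_coe,
      TwoSidedIdeal.mem_ker, map_sub, map_one, map_smul, hν, sub_self]
  have hcon : I.ringCon ≤ RingCon.ker γ.toRingHom := TwoSidedIdeal.orderIsoRingCon.monotone hle
  let π : CliffordAlgebra Q →ₐ[R] I.ringCon.Quotient := I.ringCon.mkₐ R
  have hπν : l • π (volumeElement Q e) = 1 := by
    have hmem : 1 - l • volumeElement Q e ∈ I := TwoSidedIdeal.subset_span rfl
    have hrel := (I.rel_iff _ _).mpr hmem
    rw [← map_smul, ← map_one π]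
    exact ((RingCon.eq _).mpr hrel).symm
  have hinj : Function.Injective (I.ringCon.liftₐ γ hcon) :=
    injective_of_surjective_of_smul_map_volumeElement_eq_one he hortho hB
      (RingCon.mkₐ_surjective _) hπν (RingCon.lift_surjective_of_surjective hcon hγ)
  exact ker_eq_of_injective_lift hcon hinj

end CliffordAlgebra

theorem isOrtho_weightedSumSquares_single {R S ι : Type*} [CommSemiring R] [Monoid S]
    [DistribMulAction S R] [SMulCommClass S R R] [Fintype ι] [DecidableEq ι]
    (w : ι → S) {i j : ι} (hij : i ≠ j) (a b : R) :
    (QuadraticMap.weightedSumSquares R w).IsOrtho (Pi.single i a) (Pi.single j b) := by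
  rw [QuadraticMap.isOrtho_def]
  simp only [QuadraticMap.weightedSumSquares_apply, ← Finset.sum_add_distrib, ← smul_add]
  refine Finset.sum_congr rfl fun k _ ↦ ?_
  congr 1
  rcases eq_or_ne k i with rfl | hki
  · simp [hij]
  · simp [hki]

theorem span_range_stdBasis : span ℝ (Set.range stdBasis) = ⊤ := by
  have h : stdBasis = Pi.basisFun ℝ (Fin 7) := funext fun i ↦ (Pi.basisFun_apply ℝ _ i).symm
  rw [h, Basis.span_eq]

theorem pairwise_isOrtho_stdBasis :
    Pairwise fun i j ↦ sig43.IsOrtho (stdBasis i) (stdBasis j) :=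
  fun _ _ hij ↦ isOrtho_weightedSumSquares_single _ hij 1 1

theorem vol_eq_volumeElement : vol = volumeElement sig43 stdBasis := by
  simp [vol, volumeElement, List.ofFn_succ, mul_assoc]

/-- if γ : Cl(4,3) → Mat₈(ℝ) is a surjective ℝ-algebra homomorphism
with γ(ν) = l • 1 for a sign l, then ker γ is the two-sided ideal generated by
1 − l • ν, i.e. γ factors through the simple summand Cl_l(4,3). -/
theorem ker_eq_span_one_sub_vol
    (γ : CliffordAlgebra sig43 →ₐ[ℝ] Matrix (Fin 8) (Fin 8) ℝ)
    (hγ : Function.Surjective γ) (l : ℝ) (hl : l = 1 ∨ l = -1)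
    (hν : γ vol = l • (1 : Matrix (Fin 8) (Fin 8) ℝ)) :
    ∀ x : CliffordAlgebra sig43,
      γ x = 0 ↔ x ∈ TwoSidedIdeal.span {(1 : CliffordAlgebra sig43) - l • vol} := by
  have hl_sq : l * l = 1 := mul_self_eq_one_iff.mpr hl
  have hdim : 2 ^ 6 ≤ finrank ℝ (Matrix (Fin 8) (Fin 8) ℝ) := by simp [finrank_matrix]
  have hker : TwoSidedIdeal.ker γ = TwoSidedIdeal.span {1 - l • vol} := by
    rw [vol_eq_volumeElement] at hν ⊢
    exact ker_eq_span_one_sub_vol_general span_range_stdBasis pairwise_isOrtho_stdBasis hdim hγ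
      (by rw [hν, smul_smul, hl_sq, one_smul])
  intro x
  rw [← hker, TwoSidedIdeal.mem_ker]
end

section
/- For every surjective ℝ-algebra homomorphism γ : Cl(4,3) → Mat₈(ℝ) there exists a symmetric, nondegenerate bilinear form 𝓑 on ℝ⁸ = (Fin 8 → ℝ) that is admissible for γ, i.e. for all x ∈ Cl(4,3) and all s, t ∈ ℝ⁸ one has 𝓑((γ x).mulVec s, t) = 𝓑(s, (γ ((involute ∘ reverse) x)).mulVec t), where involute and reverse are the standard automorphism π and anti-automorphism τ of the Clifford algebra. -/
/-!
Let `e` be an orthogonal basis of a nondegenerate quadratic space in which the number `p` of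
positive vectors is divisible by four, and let `E i` be the action of `e i` on a Clifford module.
Averaging any positive definite form over the `E i`, rescaled by the `|Q (e i)|`, makes each `E i`
a similitude, so that the adjoint of `E i` is `sign (Q (e i)) • E i`. Passing from `B` to
`B x (E k y)` negates the adjoint of every `E i` with `i ≠ k` and multiplies the symmetry of `B` by
the sign in the adjoint of `E k`. Doing this once for every positive `e k` negates the adjoint of
the positive generators `p - 1` times and of the negative ones `p` times, so that all generators
become skew-adjoint, which is admissibility; the symmetry of the form becomes
`(-1) ^ (p * (p - 1) / 2) = 1`.
-/

open CliffordAlgebra LinearMap Module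

/-- A bilinear form `B` on a Clifford module `ρ` is admissible if acting by `x` is adjoint to acting
by `(involute ∘ reverse) x`, the Clifford conjugate of `x`. -/
def IsAdmissible {R V W : Type*} [CommRing R] [AddCommGroup V] [Module R V] [AddCommGroup W]
    [Module R W] {Q : QuadraticForm R V} (ρ : CliffordAlgebra Q →ₐ[R] End R W)
    (B : LinearMap.BilinForm R W) : Prop :=
  ∀ x, IsAdjointPair B B (ρ x) (ρ ((involute ∘ reverse) x))

/-- The Clifford relations for a family `E`: pairwise anticommutation, with `E i` squaring to the
scalar `q i`. These are the relations between the images of orthogonal vectors in a Clifford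
module. -/
structure IsCliffordFamily {R A I : Type*} [CommRing R] [Ring A] [Algebra R A]
    (q : I → R) (E : I → A) : Prop where
  sq (i : I) : E i * E i = algebraMap R A (q i)
  anticomm : Pairwise fun i j => E i * E j = -(E j * E i)

/-- A nondegenerate form `B` of symmetry `σ` and type `c` with respect to a family of endomorphisms
`E`: swapping the arguments of `B` multiplies it by `σ`, and `E i` has adjoint `c i • E i`. -/
structure HasSymmetryAndType {R W I : Type*} [CommRing R] [AddCommGroup W] [Module R W]
    (E : I → End R W) (σ : R) (c : I → R) (B : LinearMap.BilinForm R W) : Prop where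
  separatingLeft : B.SeparatingLeft
  symmetry (x y : W) : B x y = σ * B y x
  type (i : I) (x y : W) : B (E i x) y = c i * B x (E i y)

section CommRing

variable {R V W I : Type*} [CommRing R] [AddCommGroup V] [Module R V] [AddCommGroup W]
  [Module R W] {Q : QuadraticForm R V}

theorem IsAdmissible.of_forall_ι {ρ : CliffordAlgebra Q →ₐ[R] End R W} {B : LinearMap.BilinForm R W}
    (h : ∀ v, B.IsSkewAdjoint (ρ (ι Q v))) : IsAdmissible ρ B := by
  intro x
  induction x using CliffordAlgebra.induction with
  | algebraMap r => intro s t; simp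
  | ι v => intro s t; simpa using h v s t
  | mul a b ha hb => simpa using ha.mul hb
  | add a b ha hb => intro s t; simpa using congrArg₂ (· + ·) (ha s t) (hb s t)

theorem IsAdmissible.of_basis (v : Basis I R V) {ρ : CliffordAlgebra Q →ₐ[R] End R W}
    {B : LinearMap.BilinForm R W} (h : ∀ i, B.IsSkewAdjoint (ρ (ι Q (v i)))) :
    IsAdmissible ρ B := by
  refine .of_forall_ι fun x => ?_
  have hspan : Submodule.span R (Set.range v) ≤
      B.skewAdjointSubmodule.comap (ρ.toLinearMap ∘ₗ ι Q) :=
    Submodule.span_le.2 (Set.range_subset_iff.2 fun i => (B.mem_skewAdjointSubmodule _).2 (h i))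
  exact (B.mem_skewAdjointSubmodule _).1 (hspan (v.mem_span x))

theorem isCliffordFamily_map_ι {A : Type*} [Ring A] [Algebra R A] {v : I → V}
    (hv : Pairwise fun i j => Q.IsOrtho (v i) (v j)) (ρ : CliffordAlgebra Q →ₐ[R] A) :
    IsCliffordFamily (fun i => Q (v i)) fun i => ρ (ι Q (v i)) where
  sq i := by rw [← map_mul, ι_sq_scalar, AlgHom.commutes]
  anticomm i j hij := by
    dsimp only
    rw [← map_mul, ι_mul_ι_comm_of_isOrtho (hv hij), map_neg, map_mul]

theorem IsCliffordFamily.apply_apply {q : I → R} {E : I → End R W} (hE : IsCliffordFamily q E)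
    (i : I) (x : W) : E i (E i x) = q i • x := by
  rw [← End.mul_apply, hE.sq, algebraMap_end_apply]

theorem IsCliffordFamily.apply_comm {q : I → R} {E : I → End R W} (hE : IsCliffordFamily q E)
    {i j : I} (hij : i ≠ j) (x : W) : E i (E j x) = -E j (E i x) := by
  rw [← End.mul_apply, hE.anticomm hij, LinearMap.neg_apply, End.mul_apply]

theorem HasSymmetryAndType.isSymm {E : I → End R W} {c : I → R} {B : LinearMap.BilinForm R W}
    (hB : HasSymmetryAndType E 1 c B) : B.IsSymm :=
  ⟨fun x y => by rw [hB.symmetry, one_mul]⟩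

theorem HasSymmetryAndType.nondegenerate {E : I → End R W} {c : I → R} {B : LinearMap.BilinForm R W}
    (hB : HasSymmetryAndType E 1 c B) : B.Nondegenerate :=
  hB.isSymm.isRefl.nondegenerate_iff_separatingLeft.2 hB.separatingLeft

end CommRing

section Twist

variable {K W I : Type*} [Field K] [AddCommGroup W] [Module K W] {q : I → K} {E : I → End K W}

theorem IsCliffordFamily.surjective (hE : IsCliffordFamily q E) {i : I} (hq : q i ≠ 0) :
    Function.Surjective (E i) := fun x =>
  ⟨(q i)⁻¹ • E i x, by rw [map_smul, hE.apply_apply, inv_smul_smul₀ hq]⟩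

variable [DecidableEq I] {σ : K} {c : I → K} {B : LinearMap.BilinForm K W}

theorem HasSymmetryAndType.compl₂ (hB : HasSymmetryAndType E σ c B) (hE : IsCliffordFamily q E)
    {k : I} (hq : q k ≠ 0) :
    HasSymmetryAndType E (c k * σ) (fun i => if i = k then c i else -c i) (B.compl₂ (E k)) where
  separatingLeft x hx := hB.separatingLeft x ((hE.surjective hq).forall.2 hx)
  symmetry x y := by
    rw [compl₂_apply, compl₂_apply, hB.symmetry, hB.type, mul_left_comm, mul_assoc]
  type i x y := by
    rw [compl₂_apply, compl₂_apply, hB.type]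
    split_ifs with hik
    · rw [hik]
    · rw [hE.apply_comm hik, map_neg, mul_neg, neg_mul]

theorem HasSymmetryAndType.exists_twist (hB : HasSymmetryAndType E σ c B)
    (hE : IsCliffordFamily q E) (s : Finset I) (hq : ∀ i ∈ s, q i ≠ 0) :
    ∃ B', HasSymmetryAndType E ((-1) ^ s.card.choose 2 * (∏ i ∈ s, c i) * σ)
      (fun i => (-1) ^ s.card * (if i ∈ s then -c i else c i)) B' := by
  induction s using Finset.induction_on with
  | empty => exact ⟨B, by simpa using hB⟩
  | insert k s hk ih =>
    obtain ⟨B', hB'⟩ := ih fun i hi => hq i (Finset.mem_insert_of_mem hi)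
    refine ⟨B'.compl₂ (E k), ?_⟩
    convert hB'.compl₂ hE (hq k (Finset.mem_insert_self k s)) using 1
    · rw [if_neg hk, Finset.card_insert_of_notMem hk, Finset.prod_insert hk,
        Nat.choose_succ_succ' _ 1, Nat.choose_one_right]
      ring
    · funext i
      rw [Finset.card_insert_of_notMem hk, pow_succ]
      by_cases hik : i = k
      · simp [hik, hk]
      · simp only [Finset.mem_insert, hik, false_or, if_false]
        split_ifs <;> ring

end Twist

section LinearOrder

variable {K V W I : Type*} [Field K] [LinearOrder K] [IsStrictOrderedRing K]
  [AddCommGroup V] [Module K V] [AddCommGroup W] [Module K W] {q : I → K} {E : I → End K W}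

variable (K W) in
theorem exists_isSymm_posDef : ∃ B : LinearMap.BilinForm K W, B.IsSymm ∧ ∀ x ≠ 0, 0 < B x x := by
  classical
  let b := Basis.ofVectorSpace K W
  have toDual_eq_sum (x y : W) : b.toDual x y = (b.repr x).sum fun i r => r * b.repr y i := by
    conv_lhs => rw [← b.linearCombination_repr x]
    simp [Finsupp.linearCombination_apply, Finsupp.sum, b.toDual_apply_right]
  refine ⟨b.toDual, ⟨fun x y => ?_⟩, fun x hx => ?_⟩
  · have : b.toDual = b.toDual.flip :=
      b.ext fun i => b.ext fun j => by simp [b.toDual_apply, eq_comm]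
    exact LinearMap.congr_fun₂ this x y
  · rw [toDual_eq_sum]
    exact Finset.sum_pos (fun i hi => mul_self_pos.2 (Finsupp.mem_support_iff.1 hi))
      (Finsupp.support_nonempty_iff.2 (b.repr.map_ne_zero_iff.2 hx))

theorem IsCliffordFamily.exists_posDef_scaled (hE : IsCliffordFamily q E) (hq : ∀ i, q i ≠ 0)
    (s : Finset I) :
    ∃ B : LinearMap.BilinForm K W, B.IsSymm ∧ (∀ x ≠ 0, 0 < B x x) ∧
      ∀ i ∈ s, ∀ x y, B (E i x) (E i y) = |q i| * B x y := by
  classical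
  induction s using Finset.induction_on with
  | empty =>
    obtain ⟨B, hsymm, hpos⟩ := exists_isSymm_posDef K W
    exact ⟨B, hsymm, hpos, by simp⟩
  | insert k s hk ih =>
    obtain ⟨B, hsymm, hpos, hscale⟩ := ih
    have hnonneg (x : W) : 0 ≤ B x x := by
      obtain rfl | hx := eq_or_ne x 0
      · simp
      · exact (hpos x hx).le
    refine ⟨|q k| • B + B.compl₁₂ (E k) (E k), ⟨fun x y => ?_⟩, fun x hx => ?_, fun i hi x y => ?_⟩
    · simp [hsymm.eq x y, hsymm.eq (E k x)]
    · exact add_pos_of_pos_of_nonneg (mul_pos (abs_pos.2 (hq k)) (hpos x hx)) (hnonneg _)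
    · simp only [LinearMap.add_apply, LinearMap.smul_apply, compl₁₂_apply, smul_eq_mul]
      obtain rfl | hik := eq_or_ne i k
      · simp only [hE.apply_apply, map_smul, LinearMap.smul_apply, smul_eq_mul]
        linear_combination (-B x y) * abs_mul_abs_self (q i)
      · have his := hscale i (Finset.mem_of_mem_insert_of_ne hi hik)
        simp only [hE.apply_comm hik.symm, map_neg, LinearMap.neg_apply, neg_neg, his]
        ring

theorem IsCliffordFamily.exists_type_sign [Finite I] (hE : IsCliffordFamily q E)
    (hq : ∀ i, q i ≠ 0) :
    ∃ B, HasSymmetryAndType E 1 (fun i => (SignType.sign (q i) : K)) B := by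
  cases nonempty_fintype I
  obtain ⟨B, hsymm, hpos, hscale⟩ := hE.exists_posDef_scaled hq Finset.univ
  refine ⟨B, fun x hx => ?_, fun x y => by rw [one_mul, hsymm.eq], fun i x y => ?_⟩
  · by_contra hne
    exact (hpos x hne).ne' (hx x)
  · refine mul_left_cancel₀ (hq i) ?_
    calc q i * B (E i x) y = B (E i x) (E i (E i y)) := by
          rw [hE.apply_apply, map_smul, smul_eq_mul]
      _ = |q i| * B x (E i y) := hscale i (Finset.mem_univ i) x (E i y)
      _ = q i * (SignType.sign (q i) * B x (E i y)) := by
          rw [← sign_mul_self, mul_comm (SignType.sign (q i) : K), mul_assoc]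

theorem IsCliffordFamily.exists_type_neg_one [Finite I] (hE : IsCliffordFamily q E)
    (hq : ∀ i, q i ≠ 0) (h4 : 4 ∣ {i | 0 < q i}.ncard) :
    ∃ B, HasSymmetryAndType E 1 (fun _ => -1) B := by
  classical
  cases nonempty_fintype I
  obtain ⟨B₀, hB₀⟩ := hE.exists_type_sign hq
  let s : Finset I := {i | 0 < q i}
  obtain ⟨B, hB⟩ := hB₀.exists_twist hE s fun i _ => hq i
  obtain ⟨m, hm⟩ : 4 ∣ s.card := by simpa [s, Set.ncard_eq_toFinset_card'] using h4
  have hcard : Even s.card := ⟨2 * m, by lia⟩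
  have hchoose : Even (s.card.choose 2) := by
    rw [Nat.choose_two_right, hm, show 4 * m * (4 * m - 1) = 2 * (2 * (m * (4 * m - 1))) by ring,
      Nat.mul_div_cancel_left _ two_pos]
    exact even_two_mul _
  have hprod : ∏ i ∈ s, (SignType.sign (q i) : K) = 1 :=
    Finset.prod_eq_one fun i hi => by simp [sign_pos (Finset.mem_filter.1 hi).2]
  refine ⟨B, ?_⟩
  convert hB using 1
  · rw [hchoose.neg_one_pow, hprod, one_mul, one_mul]
  · funext i
    rw [hcard.neg_one_pow, one_mul]
    split_ifs with hi
    · simp [sign_pos (Finset.mem_filter.1 hi).2]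
    · have hneg : q i < 0 := (hq i).lt_or_gt.resolve_right (by simpa [s] using hi)
      simp [sign_neg hneg]

theorem exists_basis_isOrtho_sigPos_eq [FiniteDimensional K V] {Q : QuadraticForm K V}
    (hQ : Q.Nondegenerate) :
    ∃ v : Basis (Fin (finrank K V)) K V, (Pairwise fun i j => Q.IsOrtho (v i) (v j)) ∧
      (∀ i, Q (v i) ≠ 0) ∧ sigPos Q = {i | 0 < Q (v i)}.ncard := by
  have : Invertible (2 : K) := invertibleOfNonzero two_ne_zero
  obtain ⟨v, hv⟩ :=
    LinearMap.BilinForm.exists_orthogonal_basis (QuadraticForm.associated_isSymm K Q)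
  refine ⟨v, fun i j hij => QuadraticMap.associated_isOrtho.1 (hv hij), fun i => ?_,
    QuadraticForm.sigPos_of_equiv_weightedSumSquares ⟨Q.isometryEquivWeightedSumSquares v hv⟩⟩
  rw [← QuadraticMap.associated_eq_self_apply K Q]
  exact hv.not_isOrtho_basis_self_of_separatingLeft
    (QuadraticMap.nondegenerate_associated_iff.2 hQ).1 i

theorem exists_admissible_pairing_general [FiniteDimensional K V] {Q : QuadraticForm K V}
    (hQ : Q.Nondegenerate) (h4 : 4 ∣ sigPos Q) (ρ : CliffordAlgebra Q →ₐ[K] End K W) :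
    ∃ B : LinearMap.BilinForm K W, B.IsSymm ∧ B.Nondegenerate ∧ IsAdmissible ρ B := by
  obtain ⟨v, hortho, hne, hsig⟩ := exists_basis_isOrtho_sigPos_eq hQ
  obtain ⟨B, hB⟩ := (isCliffordFamily_map_ι hortho ρ).exists_type_neg_one hne (hsig ▸ h4)
  refine ⟨B, hB.isSymm, hB.nondegenerate, .of_basis v fun i x y => ?_⟩
  simpa using hB.type i x y

end LinearOrder

theorem sig43_nondegenerate : sig43.Nondegenerate := by
  rw [QuadraticMap.nondegenerate_iff_radical_eq_bot, sig43,
    QuadraticForm.radical_weightedSumSquares, eq_bot_iff]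
  intro x hx
  rw [Pi.mem_spanSubset_iff] at hx
  ext i
  exact hx i (by fin_cases i <;> simp)

theorem sigPos_sig43 : sigPos sig43 = 4 := by
  have hpos : {i | (0 : ℝ) < ![(1 : ℝ), 1, 1, 1, -1, -1, -1] i} =
      ({0, 1, 2, 3} : Finset (Fin 7)) := by
    ext i
    fin_cases i <;> simp
  rw [sig43, QuadraticForm.sigPos_weightedSumSquares, hpos, Set.ncard_coe_finset]
  rfl

/-- every surjective ℝ-algebra homomorphism γ : Cl(4,3) → Mat₈(ℝ)
admits a symmetric nondegenerate admissible bilinear pairing 𝓑 on ℝ⁸: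
𝓑((γ x) s, t) = 𝓑(s, (γ ((π ∘ τ) x)) t) for the standard automorphism π =
involute and anti-automorphism τ = reverse. -/
theorem exists_admissible_pairing
    (γ : CliffordAlgebra sig43 →ₐ[ℝ] Matrix (Fin 8) (Fin 8) ℝ)
    (hγ : Function.Surjective γ) :
    ∃ B : (Fin 8 → ℝ) →ₗ[ℝ] (Fin 8 → ℝ) →ₗ[ℝ] ℝ,
      (∀ s t, B s t = B t s) ∧
      (∀ s, (∀ t, B s t = 0) → s = 0) ∧
      (∀ (x : CliffordAlgebra sig43) (s t : Fin 8 → ℝ),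
        B ((γ x).mulVec s) t =
          B s ((γ ((CliffordAlgebra.involute ∘ CliffordAlgebra.reverse) x)).mulVec t)) := by
  obtain ⟨B, hsymm, hnondeg, hadm⟩ := exists_admissible_pairing_general sig43_nondegenerate
    (by rw [sigPos_sig43]) (Matrix.toLinAlgEquiv'.toAlgHom.comp γ)
  exact ⟨B, hsymm.eq, hnondeg.1, hadm⟩
end

section
/- Let u₁, u₂, u₃, w₁, w₂, w₃ ∈ ℝ⁷ satisfy: Q(uᵢ) = 0 and Q(wᵢ) = 0 for all i (all six vectors are isotropic), polar Q uᵢ uⱼ = 0 and polar Q wᵢ wⱼ = 0 for i ≠ j, polar Q uᵢ wⱼ = 0 for i ≠ j, and polar Q uᵢ wᵢ = 2 for each i (i.e. ⟨uᵢ, wᵢ⟩ = 1 for the associated symmetric bilinear form). Set c := ι(u₁) * ι(u₂) * ι(u₃) and d := ι(w₁) * ι(w₂) * ι(w₃) in Cl(4,3). Then c * d * c = −8 • c. (This is the key Clifford-algebra identity, corresponding to α ∨ β ∨ α = −8α, in the proof that a wedge of three isotropic mutually orthogonal one-forms is the square of an isotropic spinor.) -/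
/-! For isotropic `u`, the Clifford relation gives `u * w * u = polar Q u w • u`. Peel `u₀` and `w₀`
off products of `n + 1` vectors, writing the three factors as `u₀ u'`, `w₀ w'`, `u₀ u'`. Moving `w₀`
past `u'`, and the second `u₀` past `w'` and `u'`, isolates `u₀ w₀ u₀` in front of `u' w' u'`. Each
of the three moves costs `(-1) ^ n`, and by induction the total sign is `(-1) ^ (3 * n.choose 2)`
for products of `n` vectors. The induction is insensitive to replacing `-1` by any scalar `q`. -/

section SkewCommutation

variable {R A : Type*} [CommSemiring R] [Semiring A] [Algebra R A]

theorem list_prod_mul_eq_pow_length_smul {q : R} {a : A} {l : List A}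
    (h : ∀ x ∈ l, x * a = q • (a * x)) : l.prod * a = q ^ l.length • (a * l.prod) := by
  induction l with
  | nil => simp
  | cons x l ih =>
    rw [List.forall_mem_cons] at h
    calc (x :: l).prod * a = x * (l.prod * a) := by rw [List.prod_cons, mul_assoc]
      _ = q ^ l.length • (x * a * l.prod) := by rw [ih h.2, mul_smul_comm, mul_assoc]
      _ = q ^ (x :: l).length • (a * (x :: l).prod) := by
        rw [h.1, smul_mul_assoc, smul_smul, List.length_cons, pow_succ, List.prod_cons, mul_assoc]

theorem ofFn_prod_mul_eq_pow_smul {q : R} {a : A} {n : ℕ} {x : Fin n → A}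
    (h : ∀ i, x i * a = q • (a * x i)) :
    (List.ofFn x).prod * a = q ^ n • (a * (List.ofFn x).prod) := by
  simpa only [List.length_ofFn] using
    list_prod_mul_eq_pow_length_smul (l := List.ofFn x) (List.forall_mem_ofFn_iff.2 h)

theorem ofFn_prod_mul_ofFn_prod_mul_ofFn_prod_eq_smul {q : R} {n : ℕ} {r : Fin n → R}
    {a b : Fin n → A}
    (haa : ∀ i j, i < j → a j * a i = q • (a i * a j))
    (hab : ∀ i j, i < j → a j * b i = q • (b i * a j))
    (hba : ∀ i j, i < j → b j * a i = q • (a i * b j))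
    (haba : ∀ i, a i * b i * a i = r i • a i) :
    (List.ofFn a).prod * (List.ofFn b).prod * (List.ofFn a).prod =
      (q ^ (3 * n.choose 2) * ∏ i, r i) • (List.ofFn a).prod := by
  induction n with
  | zero => simp
  | succ n ih =>
    rw [List.ofFn_succ, List.ofFn_succ, List.prod_cons, List.prod_cons]
    set a' := (List.ofFn fun i => a i.succ).prod
    set b' := (List.ofFn fun i => b i.succ).prod
    have tail : a' * b' * a' = (q ^ (3 * n.choose 2) * ∏ i : Fin n, r i.succ) • a' :=
      ih (fun i j hij => haa _ _ (Fin.succ_lt_succ_iff.2 hij))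
        (fun i j hij => hab _ _ (Fin.succ_lt_succ_iff.2 hij))
        (fun i j hij => hba _ _ (Fin.succ_lt_succ_iff.2 hij)) fun i => haba i.succ
    have a'_mul_a : a' * a 0 = q ^ n • (a 0 * a') :=
      ofFn_prod_mul_eq_pow_smul fun i => haa _ _ i.succ_pos
    have a'_mul_b : a' * b 0 = q ^ n • (b 0 * a') :=
      ofFn_prod_mul_eq_pow_smul fun i => hab _ _ i.succ_pos
    have b'_mul_a : b' * a 0 = q ^ n • (a 0 * b') :=
      ofFn_prod_mul_eq_pow_smul fun i => hba _ _ i.succ_pos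
    calc a 0 * a' * (b 0 * b') * (a 0 * a')
        = a 0 * (a' * b 0) * (b' * a 0) * a' := by simp only [mul_assoc]
      _ = (q ^ n * q ^ n) • (a 0 * b 0 * (a' * a 0) * b' * a') := by
        simp only [a'_mul_b, b'_mul_a, mul_smul_comm, smul_mul_assoc, smul_smul, mul_assoc]
      _ = (q ^ n * q ^ n * q ^ n) • (a 0 * b 0 * a 0 * (a' * b' * a')) := by
        simp only [a'_mul_a, mul_smul_comm, smul_mul_assoc, smul_smul, mul_assoc]
      _ = (q ^ (3 * (n + 1).choose 2) * ∏ i, r i) • (a 0 * a') := by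
        rw [haba, tail, smul_mul_smul_comm, smul_smul, Fin.prod_univ_succ,
          Nat.choose_succ_succ' n 1, Nat.choose_one_right]
        congr 1
        ring

end SkewCommutation

open CliffordAlgebra in
theorem isotropic_triple_identity_general {R M : Type*} [CommRing R] [AddCommGroup M] [Module R M]
    (Q : QuadraticForm R M) {n : ℕ} (u w : Fin n → M) (hu : ∀ i, Q (u i) = 0)
    (huu : Pairwise fun i j => Q.IsOrtho (u i) (u j))
    (huw : Pairwise fun i j => Q.IsOrtho (u i) (w j)) :
    (List.ofFn fun i => ι Q (u i)).prod * (List.ofFn fun i => ι Q (w i)).prod *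
        (List.ofFn fun i => ι Q (u i)).prod =
      ((-1) ^ n.choose 2 * ∏ i, QuadraticMap.polar Q (u i) (w i)) •
        (List.ofFn fun i => ι Q (u i)).prod := by
  have anticomm {x y : M} (h : Q.IsOrtho x y) : ι Q x * ι Q y = (-1 : R) • (ι Q y * ι Q x) := by
    rw [neg_one_smul, ι_mul_ι_comm_of_isOrtho h]
  have sandwich (i : Fin n) : ι Q (u i) * ι Q (w i) * ι Q (u i) =
      QuadraticMap.polar Q (u i) (w i) • ι Q (u i) := by
    rw [ι_mul_ι_mul_ι, hu, zero_smul, sub_zero, map_smul]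
  have sign : (-1 : R) ^ (3 * n.choose 2) = (-1) ^ n.choose 2 := by
    rw [pow_mul, Odd.neg_one_pow (by decide)]
  rw [← sign]
  exact ofFn_prod_mul_ofFn_prod_mul_ofFn_prod_eq_smul
    (fun i j hij => anticomm (huu hij.ne')) (fun i j hij => anticomm (huw hij.ne'))
    (fun i j hij => anticomm (huw hij.ne).symm) sandwich

/-- if u₁,u₂,u₃,w₁,w₂,w₃ ∈ ℝ⁷ are isotropic, mutually orthogonal
except for ⟨uᵢ,wᵢ⟩ = 1 (polar Q uᵢ wᵢ = 2), then with c = ι(u₁)ι(u₂)ι(u₃) and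
d = ι(w₁)ι(w₂)ι(w₃) one has c * d * c = −8 • c in Cl(4,3). -/
theorem isotropic_triple_identity (u w : Fin 3 → (Fin 7 → ℝ))
    (hu : ∀ i, sig43 (u i) = 0) (hw : ∀ i, sig43 (w i) = 0)
    (huu : ∀ i j, i ≠ j → QuadraticMap.polar (⇑sig43) (u i) (u j) = 0)
    (hww : ∀ i j, i ≠ j → QuadraticMap.polar (⇑sig43) (w i) (w j) = 0)
    (huw : ∀ i j, i ≠ j → QuadraticMap.polar (⇑sig43) (u i) (w j) = 0)
    (huw' : ∀ i, QuadraticMap.polar (⇑sig43) (u i) (w i) = 2) :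
    (CliffordAlgebra.ι sig43 (u 0) * CliffordAlgebra.ι sig43 (u 1) *
        CliffordAlgebra.ι sig43 (u 2)) *
      (CliffordAlgebra.ι sig43 (w 0) * CliffordAlgebra.ι sig43 (w 1) *
        CliffordAlgebra.ι sig43 (w 2)) *
      (CliffordAlgebra.ι sig43 (u 0) * CliffordAlgebra.ι sig43 (u 1) *
        CliffordAlgebra.ι sig43 (u 2)) =
    (-8 : ℝ) • (CliffordAlgebra.ι sig43 (u 0) * CliffordAlgebra.ι sig43 (u 1) *
        CliffordAlgebra.ι sig43 (u 2)) := by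
  have coeff : (-1 : ℝ) ^ 3 * 2 ^ 3 = -8 := by norm_num
  simpa [List.ofFn_succ, huw', coeff, mul_assoc] using
    isotropic_triple_identity_general sig43 u w hu
      (fun i j h => QuadraticMap.isOrtho_polarBilin.1 (huu i j h))
      (fun i j h => QuadraticMap.isOrtho_polarBilin.1 (huw i j h))
end

section
/- The set of matrices M ∈ Mat₇(ℝ) satisfying both Mᵀ * H + H * M = 0 and the infinitesimal invariance condition α(Mx, y, z) + α(x, My, z) + α(x, y, Mz) = 0 for all x, y, z ∈ ℝ⁷ equals exactly { T(A) + S(B) + N(v) : A ∈ Mat₃(ℝ) with trace A = 0, B ∈ Mat₃(ℝ) with Bᵀ = −B, v ∈ ℝ³ }. In particular this set is a 14-dimensional Lie subalgebra of Mat₇(ℝ), the Lie algebra of the stabilizer in Spin₀(4,3) of an isotropic irreducible spinor, isomorphic to 𝔰𝔩(3,ℝ) ⋉ (Λ²ℝ³ ⊕ ℝ³). -/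
open Matrix

/- The Gram matrix H = [[0, I₃, 0], [I₃, 0, 0], [0, 0, 1]] of the standard
signature-(4,3) symmetric bilinear form in an isotropic basis. -/
noncomputable def H : Matrix (Fin 7) (Fin 7) ℝ :=
  !![0,0,0,1,0,0,0;
     0,0,0,0,1,0,0;
     0,0,0,0,0,1,0;
     1,0,0,0,0,0,0;
     0,1,0,0,0,0,0;
     0,0,1,0,0,0,0;
     0,0,0,0,0,0,1]

/- 7×7 matrix in 3+3+1 block form: rows [[A, B, v], [C, D, u], [xᵀ, yᵀ, r]]. -/
noncomputable def blk (A B C D : Matrix (Fin 3) (Fin 3) ℝ) (v u x y : Fin 3 → ℝ)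
    (r : ℝ) : Matrix (Fin 7) (Fin 7) ℝ :=
  Matrix.of fun i j =>
    if hi : (i : ℕ) < 3 then
      if hj : (j : ℕ) < 3 then A ⟨i, hi⟩ ⟨j, hj⟩
      else if hj' : (j : ℕ) < 6 then B ⟨i, hi⟩ ⟨(j : ℕ) - 3, by omega⟩
      else v ⟨i, hi⟩
    else if hi' : (i : ℕ) < 6 then
      if hj : (j : ℕ) < 3 then C ⟨(i : ℕ) - 3, by omega⟩ ⟨j, hj⟩
      else if hj' : (j : ℕ) < 6 then D ⟨(i : ℕ) - 3, by omega⟩ ⟨(j : ℕ) - 3, by omega⟩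
      else u ⟨(i : ℕ) - 3, by omega⟩
    else
      if hj : (j : ℕ) < 3 then x ⟨j, hj⟩
      else if hj' : (j : ℕ) < 6 then y ⟨(j : ℕ) - 3, by omega⟩
      else r

/- T(A) = [[A, 0, 0], [0, −Aᵀ, 0], [0, 0, 0]]. -/
noncomputable def T (A : Matrix (Fin 3) (Fin 3) ℝ) : Matrix (Fin 7) (Fin 7) ℝ :=
  blk A 0 0 (-Aᵀ) 0 0 0 0 0

/- S(B) = [[0, B, 0], [0, 0, 0], [0, 0, 0]]. -/
noncomputable def S (B : Matrix (Fin 3) (Fin 3) ℝ) : Matrix (Fin 7) (Fin 7) ℝ :=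
  blk 0 B 0 0 0 0 0 0 0

/- N(v) = [[0, 0, v], [0, 0, 0], [0, −vᵀ, 0]]. -/
noncomputable def N (v : Fin 3 → ℝ) : Matrix (Fin 7) (Fin 7) ℝ :=
  blk 0 0 0 0 v 0 0 (-v) 0

/- The 3-form α = ϑ∧θ∧η, the square of an isotropic irreducible spinor:
α(x,y,z) = det [[x₃,y₃,z₃],[x₄,y₄,z₄],[x₅,y₅,z₅]]. -/
noncomputable def α (x y z : Fin 7 → ℝ) : ℝ :=
  Matrix.det !![x 3, y 3, z 3; x 4, y 4, z 4; x 5, y 5, z 5]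

/-!
The form `α` is the determinant of the coordinates along the second summand of `ℝ³ ⊕ ℝ³ ⊕ ℝ`.
Differentiating the determinant shows that a block matrix kills it exactly when its middle block
row is `(0, D, 0)` with `D` traceless. Skewness for the Gram matrix ties the remaining blocks
together in transposed pairs, so only `A = -Dᵀ`, a skew block `B`, the column `V` and a skew block
`Z` on the complement of the hyperbolic part stay free. In signature `(4, 3)` that complement is a
line, hence `Z = 0`. The argument works for `Rⁿ ⊕ Rⁿ ⊕ Rᵐ` over any commutative ring.
-/

section Blocks

variable {n m R : Type*}

/-- The block matrix with rows `[A, B, V]`, `[C, D, U]`, `[X, Y, Z]`: the counterpart of `blk` for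
arbitrary index types. -/
def blocks (A B C D : Matrix n n R) (V U : Matrix n m R) (X Y : Matrix m n R) (Z : Matrix m m R) :
    Matrix ((n ⊕ n) ⊕ m) ((n ⊕ n) ⊕ m) R :=
  fromBlocks (fromBlocks A B C D) (fromRows V U) (fromCols X Y) Z

theorem exists_eq_blocks (M : Matrix ((n ⊕ n) ⊕ m) ((n ⊕ n) ⊕ m) R) :
    ∃ A B C D V U X Y Z, M = blocks A B C D V U X Y Z :=
  ⟨_, _, _, _, _, _, _, _, _, by
    rw [blocks, fromBlocks_toBlocks, fromRows_toRows, fromCols_toCols, fromBlocks_toBlocks]⟩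

theorem blocks_inj {A B C D A' B' C' D' : Matrix n n R} {V U V' U' : Matrix n m R}
    {X Y X' Y' : Matrix m n R} {Z Z' : Matrix m m R} :
    blocks A B C D V U X Y Z = blocks A' B' C' D' V' U' X' Y' Z' ↔
      (A = A' ∧ B = B' ∧ C = C' ∧ D = D') ∧ (V = V' ∧ U = U') ∧ (X = X' ∧ Y = Y') ∧ Z = Z' := by
  simp only [blocks, fromBlocks_inj, fromRows_inj.eq_iff, fromCols_inj.eq_iff]

theorem blocks_eq_zero_iff [Zero R] {A B C D : Matrix n n R} {V U : Matrix n m R}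
    {X Y : Matrix m n R} {Z : Matrix m m R} :
    blocks A B C D V U X Y Z = 0 ↔
      (A = 0 ∧ B = 0 ∧ C = 0 ∧ D = 0) ∧ (V = 0 ∧ U = 0) ∧ (X = 0 ∧ Y = 0) ∧ Z = 0 := by
  have blocks_zero : blocks (0 : Matrix n n R) 0 0 0 (0 : Matrix n m R) 0 0 0 0 = 0 := by
    ext ((i | i) | i) ((j | j) | j) <;> rfl
  rw [← blocks_zero, blocks_inj]

end Blocks

section Skew

variable {n m R : Type*} [DecidableEq n] [DecidableEq m]

/-- The Gram matrix of the orthogonal sum of the hyperbolic form on `Rⁿ ⊕ Rⁿ`, in an isotropic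
basis, and the standard form on `Rᵐ`; the case `n = 3`, `m = 1` is `H`. -/
def splitGram (n m R : Type*) [DecidableEq n] [DecidableEq m] [Zero R] [One R] :
    Matrix ((n ⊕ n) ⊕ m) ((n ⊕ n) ⊕ m) R :=
  fromBlocks (fromBlocks 0 1 1 0) 0 0 1

variable [Fintype n] [Fintype m] [NonAssocRing R]
  {A B C D : Matrix n n R} {V U : Matrix n m R} {X Y : Matrix m n R} {Z : Matrix m m R}

theorem blocks_transpose_mul_splitGram_add :
    (blocks A B C D V U X Y Z)ᵀ * splitGram n m R + splitGram n m R * blocks A B C D V U X Y Z =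
      blocks (Cᵀ + C) (Aᵀ + D) (Dᵀ + A) (Bᵀ + B) (Xᵀ + U) (Yᵀ + V) (Uᵀ + X) (Vᵀ + Y) (Zᵀ + Z) := by
  ext ((i | i) | i) ((j | j) | j) <;>
    simp [blocks, splitGram, Matrix.mul_apply, one_apply]

theorem blocks_transpose_mul_splitGram_add_eq_zero_iff :
    (blocks A B C D V U X Y Z)ᵀ * splitGram n m R + splitGram n m R * blocks A B C D V U X Y Z = 0 ↔
      Bᵀ = -B ∧ Cᵀ = -C ∧ D = -Aᵀ ∧ X = -Uᵀ ∧ Y = -Vᵀ ∧ Zᵀ = -Z := by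
  rw [blocks_transpose_mul_splitGram_add, blocks_eq_zero_iff]
  simp only [add_eq_zero_iff_eq_neg]
  constructor
  · rintro ⟨⟨hC, hA, -, hB⟩, -, ⟨hU, hV⟩, hZ⟩
    exact ⟨hB, hC, (neg_eq_iff_eq_neg.mpr hA).symm, (neg_eq_iff_eq_neg.mpr hU).symm,
      (neg_eq_iff_eq_neg.mpr hV).symm, hZ⟩
  · rintro ⟨hB, hC, rfl, rfl, rfl, hZ⟩
    simp [hB, hC, hZ]

end Skew

section NullVolume

theorem mul_blocks_transpose_toCols {n m R : Type*} [Fintype n] [Fintype m]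
    [NonUnitalNonAssocSemiring R] {A B C D : Matrix n n R} {V U : Matrix n m R}
    {X Y : Matrix m n R} {Z : Matrix m m R} (P Q : Matrix n n R) (W : Matrix n m R) :
    (fromCols (fromCols P Q) W * (blocks A B C D V U X Y Z)ᵀ).toCols₁.toCols₂ =
      P * Cᵀ + Q * Dᵀ + W * Uᵀ := by
  ext i j
  simp [blocks, Matrix.mul_apply]

variable {n m R : Type*} [Fintype n] [DecidableEq n] [CommRing R]

/-- Jacobi's formula for the derivative of `det` at `X` in the direction `Y`. -/
theorem sum_det_updateRow (X Y : Matrix n n R) :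
    ∑ j, (X.updateRow j (Y j)).det = (Y * X.adjugate).trace := by
  refine Finset.sum_congr rfl fun j _ => ?_
  rw [← cramer_transpose_apply, cramer_eq_adjugate_mulVec, ← adjugate_transpose, mulVec_transpose]
  rfl

/-- The decomposable `n`-form on `Rⁿ ⊕ Rⁿ ⊕ Rᵐ` given by the determinant of the middle coordinates,
that is, the wedge of the duals under `splitGram` of the first `n` basis vectors; the case `n = 3`,
`m = 1` is `α`. -/
def nullVolume (n m R : Type*) [Fintype n] [DecidableEq n] [CommRing R] :
    ((n ⊕ n) ⊕ m → R) [⋀^n]→ₗ[R] R :=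
  detRowAlternating.compLinearMap (LinearMap.funLeft R R (Sum.inl ∘ Sum.inr))

theorem nullVolume_apply (x : n → (n ⊕ n) ⊕ m → R) :
    nullVolume n m R x = (of x).toCols₁.toCols₂.det :=
  rfl

variable [Fintype m]

theorem sum_nullVolume_update (M : Matrix ((n ⊕ n) ⊕ m) ((n ⊕ n) ⊕ m) R)
    (x : n → (n ⊕ n) ⊕ m → R) :
    ∑ j, nullVolume n m R (Function.update x j (M *ᵥ x j)) =
      ((of x * Mᵀ).toCols₁.toCols₂ * (of x).toCols₁.toCols₂.adjugate).trace := by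
  rw [← sum_det_updateRow]
  refine Finset.sum_congr rfl fun j _ => ?_
  rw [nullVolume_apply]
  congr 1
  ext i k
  obtain rfl | h := eq_or_ne i j
  · simp [Matrix.mul_apply, mulVec, dotProduct, mul_comm]
  · simp [h]

variable {A B C D : Matrix n n R} {V U : Matrix n m R} {X Y : Matrix m n R} {Z : Matrix m m R}

theorem forall_sum_nullVolume_update_blocks_eq_zero_iff :
    (∀ x, ∑ j, nullVolume n m R (Function.update x j (blocks A B C D V U X Y Z *ᵥ x j)) = 0) ↔
      D.trace = 0 ∧ C = 0 ∧ U = 0 := by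
  simp only [sum_nullVolume_update]
  constructor
  · intro h
    have key (P : Matrix n n R) (W : Matrix n m R) : (P * Cᵀ + Dᵀ + W * Uᵀ).trace = 0 := by
      simpa [mul_blocks_transpose_toCols] using h (of.symm (fromCols (fromCols P 1) W))
    have hD : D.trace = 0 := by simpa using key 0 0
    refine ⟨hD, transpose_eq_zero.mp ?_, transpose_eq_zero.mp ?_⟩
    · exact ext_iff_trace_mul_left.mpr fun P => by simpa [hD] using key P 0
    · exact ext_iff_trace_mul_left.mpr fun W => by simpa [hD] using key 0 W
  · rintro ⟨hD, rfl, rfl⟩ x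
    obtain ⟨P, Q, W, hx⟩ : ∃ P Q W, of x = fromCols (fromCols P Q) W :=
      ⟨_, _, _, by rw [fromCols_toCols, fromCols_toCols]⟩
    rw [hx, mul_blocks_transpose_toCols]
    simp only [toCols₁_fromCols, toCols₂_fromCols, transpose_zero, Matrix.mul_zero, zero_add,
      add_zero]
    calc (Q * Dᵀ * Q.adjugate).trace
      _ = (Q.adjugate * Q * Dᵀ).trace := by rw [trace_mul_comm, Matrix.mul_assoc]
      _ = Q.det * D.trace := by simp [adjugate_mul]
      _ = 0 := by rw [hD, mul_zero]

end NullVolume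

theorem stabilizer_isotropic_spinor_general {n m R : Type*} [Fintype n] [DecidableEq n] [Fintype m]
    [DecidableEq m] [CommRing R] (M : Matrix ((n ⊕ n) ⊕ m) ((n ⊕ n) ⊕ m) R) :
    (Mᵀ * splitGram n m R + splitGram n m R * M = 0 ∧
        ∀ x, ∑ j, nullVolume n m R (Function.update x j (M *ᵥ x j)) = 0) ↔
      ∃ (A B : Matrix n n R) (V : Matrix n m R) (Z : Matrix m m R),
        A.trace = 0 ∧ Bᵀ = -B ∧ Zᵀ = -Z ∧ M = blocks A B 0 (-Aᵀ) V 0 0 (-Vᵀ) Z := by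
  constructor
  · obtain ⟨A, B, C, D, V, U, X, Y, Z, rfl⟩ := exists_eq_blocks M
    rw [blocks_transpose_mul_splitGram_add_eq_zero_iff,
      forall_sum_nullVolume_update_blocks_eq_zero_iff]
    rintro ⟨⟨hB, -, rfl, rfl, rfl, hZ⟩, hA, rfl, rfl⟩
    exact ⟨A, B, V, Z, by simpa using hA, hB, hZ, by simp⟩
  · rintro ⟨A, B, V, Z, hA, hB, hZ, rfl⟩
    rw [blocks_transpose_mul_splitGram_add_eq_zero_iff,
      forall_sum_nullVolume_update_blocks_eq_zero_iff]
    simp [hA, hB, hZ]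

section SignatureFourThree

/-- Splitting of the coordinates of `ℝ⁷` as `3 + 3 + 1`. -/
def splitCoords : (Fin 3 ⊕ Fin 3) ⊕ Fin 1 ≃ Fin 7 :=
  ((finSumFinEquiv.sumCongr (Equiv.refl _)).trans finSumFinEquiv : _ ≃ Fin (3 + 3 + 1))

@[simp]
theorem coe_splitCoords_inl_inl (i : Fin 3) : (splitCoords (.inl (.inl i)) : ℕ) = i :=
  rfl

@[simp]
theorem coe_splitCoords_inl_inr (i : Fin 3) : (splitCoords (.inl (.inr i)) : ℕ) = 3 + i :=
  rfl

@[simp]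
theorem splitCoords_inr (i : Fin 1) : splitCoords (.inr i) = 6 := by
  fin_cases i
  rfl

theorem blk_submatrix_splitCoords (A B C D : Matrix (Fin 3) (Fin 3) ℝ) (v u x y : Fin 3 → ℝ)
    (r : ℝ) :
    (blk A B C D v u x y r).submatrix splitCoords splitCoords =
      blocks A B C D (replicateCol (Fin 1) v) (replicateCol (Fin 1) u) (replicateRow (Fin 1) x)
        (replicateRow (Fin 1) y) (of fun _ _ => r) := by
  have add_lt (k : Fin 3) : 3 + (k : ℕ) < 6 := by lia
  ext ((i | i) | i) ((j | j) | j) <;> simp [blk, blocks, add_lt]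

theorem H_submatrix_splitCoords :
    H.submatrix splitCoords splitCoords = splitGram (Fin 3) (Fin 1) ℝ := by
  ext ((i | i) | i) ((j | j) | j) <;> fin_cases i <;> fin_cases j <;> rfl

theorem blk_add_blk (A B C D A' B' C' D' : Matrix (Fin 3) (Fin 3) ℝ)
    (v u x y v' u' x' y' : Fin 3 → ℝ) (r r' : ℝ) :
    blk A B C D v u x y r + blk A' B' C' D' v' u' x' y' r' =
      blk (A + A') (B + B') (C + C') (D + D') (v + v') (u + u') (x + x') (y + y') (r + r') := by
  ext i j
  simp only [blk, Matrix.add_apply, of_apply]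
  split_ifs <;> rfl

theorem T_add_S_add_N (A B : Matrix (Fin 3) (Fin 3) ℝ) (v : Fin 3 → ℝ) :
    T A + S B + N v = blk A B 0 (-Aᵀ) v 0 0 (-v) 0 := by
  simp [T, S, N, blk_add_blk]

theorem α_eq_nullVolume (x : Fin 3 → Fin 7 → ℝ) :
    α (x 0) (x 1) (x 2) = nullVolume (Fin 3) (Fin 1) ℝ (fun j => x j ∘ splitCoords) := by
  rw [α, nullVolume_apply, ← det_transpose]
  congr 1
  ext i j
  fin_cases i <;> fin_cases j <;> rfl

variable (M : Matrix (Fin 7) (Fin 7) ℝ)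

theorem transpose_mul_H_add_eq_zero_iff :
    Mᵀ * H + H * M = 0 ↔
      (M.submatrix splitCoords splitCoords)ᵀ * splitGram (Fin 3) (Fin 1) ℝ +
        splitGram (Fin 3) (Fin 1) ℝ * M.submatrix splitCoords splitCoords = 0 := by
  rw [← H_submatrix_splitCoords, transpose_submatrix, submatrix_mul_equiv, submatrix_mul_equiv,
    ← Pi.add_apply, ← Pi.add_apply, ← submatrix_add]
  exact (reindex splitCoords.symm splitCoords.symm).apply_eq_iff_eq.symm

theorem sum_nullVolume_update_comp_splitCoords (x : Fin 3 → Fin 7 → ℝ) :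
    ∑ j, nullVolume (Fin 3) (Fin 1) ℝ (Function.update (fun j => x j ∘ splitCoords) j
        (M.submatrix splitCoords splitCoords *ᵥ (x j ∘ splitCoords))) =
      α (M *ᵥ x 0) (x 1) (x 2) + α (x 0) (M *ᵥ x 1) (x 2) + α (x 0) (x 1) (M *ᵥ x 2) := by
  have term_eq (j : Fin 3) :
      nullVolume (Fin 3) (Fin 1) ℝ (Function.update (fun j => x j ∘ splitCoords) j
        (M.submatrix splitCoords splitCoords *ᵥ (x j ∘ splitCoords))) =
      α (Function.update x j (M *ᵥ x j) 0) (Function.update x j (M *ᵥ x j) 1)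
        (Function.update x j (M *ᵥ x j) 2) := by
    rw [α_eq_nullVolume, submatrix_mulVec_equiv, Function.comp_assoc, Equiv.self_comp_symm,
      Function.comp_id]
    exact congrArg _ (Function.comp_update (· ∘ splitCoords) x j _).symm
  simp [term_eq, Fin.sum_univ_three]

theorem forall_α_mulVec_eq_zero_iff :
    (∀ x y z, α (M *ᵥ x) y z + α x (M *ᵥ y) z + α x y (M *ᵥ z) = 0) ↔
      ∀ x, ∑ j, nullVolume (Fin 3) (Fin 1) ℝ
        (Function.update x j (M.submatrix splitCoords splitCoords *ᵥ x j)) = 0 := by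
  constructor
  · intro h x
    simpa [Function.comp_assoc, h] using
      sum_nullVolume_update_comp_splitCoords M fun j => x j ∘ splitCoords.symm
  · intro h x y z
    simpa [h] using (sum_nullVolume_update_comp_splitCoords M ![x, y, z]).symm

theorem T_add_S_add_N_submatrix_splitCoords (A B : Matrix (Fin 3) (Fin 3) ℝ) (v : Fin 3 → ℝ) :
    (T A + S B + N v).submatrix splitCoords splitCoords =
      blocks A B 0 (-Aᵀ) (replicateCol (Fin 1) v) 0 0 (-(replicateCol (Fin 1) v)ᵀ) 0 := by
  rw [T_add_S_add_N, blk_submatrix_splitCoords]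
  exact blocks_inj.mpr ⟨⟨rfl, rfl, rfl, rfl⟩, ⟨rfl, rfl⟩, ⟨rfl, rfl⟩, rfl⟩

theorem exists_eq_T_add_S_add_N_iff :
    (∃ A B v, A.trace = 0 ∧ Bᵀ = -B ∧ M = T A + S B + N v) ↔
      ∃ (A B : Matrix (Fin 3) (Fin 3) ℝ) (V : Matrix (Fin 3) (Fin 1) ℝ)
        (Z : Matrix (Fin 1) (Fin 1) ℝ), A.trace = 0 ∧ Bᵀ = -B ∧ Zᵀ = -Z ∧
          M.submatrix splitCoords splitCoords = blocks A B 0 (-Aᵀ) V 0 0 (-Vᵀ) Z := by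
  constructor
  · rintro ⟨A, B, v, hA, hB, rfl⟩
    exact ⟨A, B, _, 0, hA, hB, by simp, T_add_S_add_N_submatrix_splitCoords A B v⟩
  · rintro ⟨A, B, V, Z, hA, hB, hZ, hM⟩
    have hZT : Zᵀ = Z := by
      ext i j
      rw [transpose_apply, Subsingleton.elim i j]
    have hZ0 : Z = 0 := by
      ext i j
      exact self_eq_neg.mp (congr_fun₂ (hZT.symm.trans hZ) i j)
    have hV : V = replicateCol (Fin 1) (V.col 0) := by
      ext i j
      rw [Subsingleton.elim j 0]
      rfl
    refine ⟨A, B, V.col 0, hA, hB, (reindex splitCoords.symm splitCoords.symm).injective ?_⟩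
    simp only [reindex_apply, Equiv.symm_symm]
    rw [hM, T_add_S_add_N_submatrix_splitCoords, ← hV, hZ0]

end SignatureFourThree

/-- the stabilizer Lie algebra of an isotropic irreducible spinor:
matrices in 𝔰𝔬(4,3) infinitesimally preserving α are exactly the
T(A) + S(B) + N(v) with A traceless and B skew-symmetric. -/
theorem stabilizer_isotropic_spinor :
    {M : Matrix (Fin 7) (Fin 7) ℝ |
        Mᵀ * H + H * M = 0 ∧
        ∀ x y z : Fin 7 → ℝ,
          α (M.mulVec x) y z + α x (M.mulVec y) z + α x y (M.mulVec z) = 0} =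
      {M : Matrix (Fin 7) (Fin 7) ℝ |
        ∃ (A B : Matrix (Fin 3) (Fin 3) ℝ) (v : Fin 3 → ℝ),
          A.trace = 0 ∧ Bᵀ = -B ∧ M = T A + S B + N v} := by
  ext M
  rw [Set.mem_ofPred_eq, Set.mem_ofPred_eq, transpose_mul_H_add_eq_zero_iff,
    forall_α_mulVec_eq_zero_iff, exists_eq_T_add_S_add_N_iff, stabilizer_isotropic_spinor_general]
end

section
/- For all A, A₁, A₂ ∈ Mat₃(ℝ), all skew-symmetric B ∈ Mat₃(ℝ), and all v ∈ ℝ³, the matrix commutators satisfy: ⁅T(A₁), T(A₂)⁆ = T(A₁A₂ − A₂A₁), ⁅T(A), S(B)⁆ = S(AB + BAᵀ) (and AB + BAᵀ is again skew-symmetric), and ⁅T(A), N(v)⁆ = N(A.mulVec v). These relations exhibit the semidirect-product structure 𝔰𝔩(3,ℝ) ⋉ (Λ²ℝ³ ⊕ ℝ³) of the stabilizer Lie algebra of an isotropic spinor. -/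
open Matrix

/-!
After splitting the index set `Fin 7` as `(3 + 3) + 1`, the commutators are read off from block
multiplication. The blocks `A` and `-Aᵀ` of `T A` act by dual representations, so the bracket with
`T A` acts on the corner `B` by `B ↦ A B + B Aᵀ`, the action on `ℝ³ ⊗ ℝ³`, which preserves skew
tensors. It sends both the column `v` and the row `-vᵀ` of `N v` to those of `N (A v)`.
-/

section Relations

variable {n R : Type*} [CommRing R]

/-- `[[A, 0, 0], [0, -Aᵀ, 0], [0, 0, 0]]`, the analogue of `T A` for an arbitrary size
`n`, indexed by a sum type so that block multiplication applies. -/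
def blockT (A : Matrix n n R) : Matrix ((n ⊕ n) ⊕ Fin 1) ((n ⊕ n) ⊕ Fin 1) R :=
  fromBlocks (fromBlocks A 0 0 (-Aᵀ)) 0 0 0

/-- `[[0, B, 0], [0, 0, 0], [0, 0, 0]]`, the analogue of `S B` for an arbitrary size `n`. -/
def blockS (B : Matrix n n R) : Matrix ((n ⊕ n) ⊕ Fin 1) ((n ⊕ n) ⊕ Fin 1) R :=
  fromBlocks (fromBlocks 0 B 0 0) 0 0 0

/-- `[[0, 0, v], [0, 0, 0], [0, -vᵀ, 0]]`, the analogue of `N v` for an arbitrary size `n`. -/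
def blockN (v : n → R) : Matrix ((n ⊕ n) ⊕ Fin 1) ((n ⊕ n) ⊕ Fin 1) R :=
  fromBlocks 0 (replicateCol (Fin 1) (Sum.elim v 0)) (replicateRow (Fin 1) (Sum.elim 0 (-v))) 0

variable [Fintype n]

theorem transpose_mul_add_mul_transpose_eq_neg (A : Matrix n n R) {B : Matrix n n R}
    (hB : Bᵀ = -B) : (A * B + B * Aᵀ)ᵀ = -(A * B + B * Aᵀ) := by
  simp [hB, add_comm]

theorem lie_blockT_blockT (A₁ A₂ : Matrix n n R) :
    ⁅blockT A₁, blockT A₂⁆ = blockT (A₁ * A₂ - A₂ * A₁) := by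
  simp [Ring.lie_def, blockT, fromBlocks_multiply, sub_eq_add_neg, fromBlocks_neg, fromBlocks_add]

theorem lie_blockT_blockS (A B : Matrix n n R) :
    ⁅blockT A, blockS B⁆ = blockS (A * B + B * Aᵀ) := by
  simp [Ring.lie_def, blockT, blockS, fromBlocks_multiply, sub_eq_add_neg, fromBlocks_neg,
    fromBlocks_add]

theorem lie_blockT_blockN (A : Matrix n n R) (v : n → R) :
    ⁅blockT A, blockN v⁆ = blockN (A *ᵥ v) := by
  have column : fromBlocks A 0 0 (-Aᵀ) *ᵥ Sum.elim v 0 = Sum.elim (A *ᵥ v) 0 := by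
    simp [fromBlocks_mulVec]
  have row : Sum.elim 0 (-v) ᵥ* fromBlocks A 0 0 (-Aᵀ) = Sum.elim (0 : n → R) (A *ᵥ v) := by
    simp [vecMul_fromBlocks, vecMul_transpose, vecMul_neg, mulVec_neg]
  have neg_row : -replicateRow (Fin 1) (Sum.elim (0 : n → R) (A *ᵥ v)) =
      replicateRow (Fin 1) (Sum.elim 0 (-(A *ᵥ v))) := by
    ext _ (j | j) <;> simp
  simp [Ring.lie_def, blockT, blockN, fromBlocks_multiply, ← replicateCol_mulVec,
    ← replicateRow_vecMul, column, row, neg_row, sub_eq_add_neg, fromBlocks_neg, fromBlocks_add]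

theorem semidirect_relations_general (A A₁ A₂ B : Matrix n n R) (hB : Bᵀ = -B) (v : n → R) :
    ⁅blockT A₁, blockT A₂⁆ = blockT (A₁ * A₂ - A₂ * A₁) ∧
    ⁅blockT A, blockS B⁆ = blockS (A * B + B * Aᵀ) ∧
    (A * B + B * Aᵀ)ᵀ = -(A * B + B * Aᵀ) ∧
    ⁅blockT A, blockN v⁆ = blockN (A *ᵥ v) :=
  ⟨lie_blockT_blockT A₁ A₂, lie_blockT_blockS A B, transpose_mul_add_mul_transpose_eq_neg A hB,
    lie_blockT_blockN A v⟩

end Relations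

/-- The order-preserving numbering of the positions of a 3+3+1 block decomposition, which transports
`blockT`, `blockS` and `blockN` to `T`, `S` and `N`. -/
def blockEquiv : (Fin 3 ⊕ Fin 3) ⊕ Fin 1 ≃ Fin 7 :=
  (finSumFinEquiv.sumCongr (Equiv.refl (Fin 1))).trans finSumFinEquiv

theorem coe_blockEquiv_inl_inl (i : Fin 3) : (blockEquiv (.inl (.inl i)) : ℕ) = i := rfl

theorem coe_blockEquiv_inl_inr (i : Fin 3) : (blockEquiv (.inl (.inr i)) : ℕ) = 3 + i := rfl

theorem coe_blockEquiv_inr (i : Fin 1) : (blockEquiv (.inr i) : ℕ) = 6 + i := rfl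

theorem blk_eq_reindexLieEquiv_fromBlocks (A B C D : Matrix (Fin 3) (Fin 3) ℝ)
    (v u x y : Fin 3 → ℝ) (r : ℝ) :
    blk A B C D v u x y r = reindexLieEquiv (R := ℝ) blockEquiv
      (fromBlocks (fromBlocks A B C D) (replicateCol (Fin 1) (Sum.elim v u))
        (replicateRow (Fin 1) (Sum.elim x y)) (diagonal fun _ => r)) := by
  have three_add_lt_six (k : Fin 3) : 3 + (k : ℕ) < 6 := by lia
  rw [reindexLieEquiv_apply, ← Equiv.symm_apply_eq]
  ext ((i | i) | i) ((j | j) | j) <;> simp [blk, coe_blockEquiv_inl_inl, coe_blockEquiv_inl_inr,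
    coe_blockEquiv_inr, three_add_lt_six, diagonal_apply, eq_iff_true_of_subsingleton]

theorem T_eq_reindexLieEquiv_blockT (A : Matrix (Fin 3) (Fin 3) ℝ) :
    T A = reindexLieEquiv (R := ℝ) blockEquiv (blockT A) := by
  simp [T, blockT, blk_eq_reindexLieEquiv_fromBlocks]

theorem S_eq_reindexLieEquiv_blockS (B : Matrix (Fin 3) (Fin 3) ℝ) :
    S B = reindexLieEquiv (R := ℝ) blockEquiv (blockS B) := by
  simp [S, blockS, blk_eq_reindexLieEquiv_fromBlocks]

theorem N_eq_reindexLieEquiv_blockN (v : Fin 3 → ℝ) :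
    N v = reindexLieEquiv (R := ℝ) blockEquiv (blockN v) := by
  simp [N, blockN, blk_eq_reindexLieEquiv_fromBlocks]

/-- commutator relations exhibiting the semidirect-product
structure 𝔰𝔩(3,ℝ) ⋉ (Λ²ℝ³ ⊕ ℝ³): ⁅T(A₁),T(A₂)⁆ = T(⁅A₁,A₂⁆),
⁅T(A),S(B)⁆ = S(AB + BAᵀ) with AB + BAᵀ again skew, and ⁅T(A),N(v)⁆ = N(Av). -/
theorem semidirect_relations (A A₁ A₂ B : Matrix (Fin 3) (Fin 3) ℝ)
    (hB : Bᵀ = -B) (v : Fin 3 → ℝ) :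
    ⁅T A₁, T A₂⁆ = T (A₁ * A₂ - A₂ * A₁) ∧
    ⁅T A, S B⁆ = S (A * B + B * Aᵀ) ∧
    (A * B + B * Aᵀ)ᵀ = -(A * B + B * Aᵀ) ∧
    ⁅T A, N v⁆ = N (A.mulVec v) := by
  simpa only [T_eq_reindexLieEquiv_blockT, S_eq_reindexLieEquiv_blockS,
    N_eq_reindexLieEquiv_blockN, ← LieEquiv.map_lie, EmbeddingLike.apply_eq_iff_eq]
    using semidirect_relations_general A A₁ A₂ B hB v
end
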